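/- Stein's lemma for parallel channel discrimination: Let E, F : M_d(ℂ) → M_{d'}(ℂ) be quantum channels. Then the infimum over ε ∈ (0,1) of limsup_{n→∞} (1/n) D_H^ε(E^{⊗n}‖F^{⊗n}) and the infimum over ε ∈ (0,1) of liminf_{n→∞} (1/n) D_H^ε(E^{⊗n}‖F^{⊗n}) are both equal to D^reg(E‖F) in the extended reals, where D_H^ε applied to channels denotes the channel divergence induced by the hypothesis testing divergence. -/

import Mathlib

open scoped Kronecker ComplexOrder

noncomputable section

namespace QCD

attribute [local instance] Classical.propDecidable

variable {n m : Type} [Fintype n] [DecidableEq n] [Fintype m] [DecidableEq m]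

/-- The real part of the trace of a complex matrix. -/
def rtr (A : Matrix n n ℂ) : ℝ := (A.trace).re

/-- A quantum state: positive semidefinite with trace one. -/
def IsState (ρ : Matrix n n ℂ) : Prop := ρ.PosSemidef ∧ ρ.trace = 1

/-- Loewner order: `A ≤ B` iff `B - A` is positive semidefinite. -/
def loewnerLE (A B : Matrix n n ℂ) : Prop := (B - A).PosSemidef

/-- Support containment (for PSD matrices): `ker σ ⊆ ker ρ`. -/
def SuppLE (ρ σ : Matrix n n ℂ) : Prop := ∀ v : n → ℂ, σ.mulVec v = 0 → ρ.mulVec v = 0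

/-- Functional calculus for Hermitian matrices (junk value `0` otherwise). -/
def matFun (f : ℝ → ℝ) (A : Matrix n n ℂ) : Matrix n n ℂ :=
  if hA : A.IsHermitian then
    (hA.eigenvectorUnitary : Matrix n n ℂ) *
      Matrix.diagonal (fun i => (f (hA.eigenvalues i) : ℂ)) *
      (star (hA.eigenvectorUnitary : Matrix n n ℂ))
  else 0

/-- Matrix square root via functional calculus. -/
def msqrt (A : Matrix n n ℂ) : Matrix n n ℂ := matFun Real.sqrt A

/-- Matrix real power taken on the support (`0 ^ t := 0`). -/
def mpow (A : Matrix n n ℂ) (t : ℝ) : Matrix n n ℂ :=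
  matFun (fun x => if x = 0 then 0 else x ^ t) A

/-- Matrix base-2 logarithm on the support. -/
def mlog (A : Matrix n n ℂ) : Matrix n n ℂ := matFun (Real.logb 2) A

/-- Positive part of a Hermitian matrix. -/
def mposPart (A : Matrix n n ℂ) : Matrix n n ℂ := matFun (fun x => max x 0) A

/-- Trace norm. -/
def traceNorm (A : Matrix n m ℂ) : ℝ := rtr (msqrt (A.conjTranspose * A))

/-- Base-2 logarithm as an extended real (`⊥` on nonpositive input). -/
def elog (x : ℝ) : EReal := if x ≤ 0 then ⊥ else ((Real.logb 2 x : ℝ) : EReal)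

/-- Base-2 logarithm of an extended real. -/
def elogE (x : EReal) : EReal := if x = ⊤ then ⊤ else elog x.toReal

/-- `2 ^ x` for an extended real `x`. -/
def epow2 (x : EReal) : EReal :=
  if x = ⊤ then ⊤ else if x = ⊥ then 0 else ((((2:ℝ) ^ x.toReal : ℝ)) : EReal)

/-- Umegaki relative entropy (base 2), `⊤` if the support condition fails. -/
def relEntropy (ρ σ : Matrix n n ℂ) : EReal :=
  if SuppLE ρ σ then ((rtr (ρ * (mlog ρ - mlog σ)) : ℝ) : EReal) else ⊤

/-- Petz–Rényi divergence (base 2). -/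
def petzRenyi (α : ℝ) (ρ σ : Matrix n n ℂ) : EReal :=
  if 1 < α ∧ ¬ SuppLE ρ σ then ⊤
  else (((α - 1)⁻¹ : ℝ) : EReal) * elog (rtr (mpow ρ α * mpow σ (1 - α)))

/-- Geometric (maximal) Rényi divergence (base 2). -/
def geomRenyi (α : ℝ) (ρ σ : Matrix n n ℂ) : EReal :=
  if SuppLE ρ σ then
    (((α - 1)⁻¹ : ℝ) : EReal) *
      elog (rtr (σ * mpow (mpow σ (-(1/2 : ℝ)) * ρ * mpow σ (-(1/2 : ℝ))) α))
  else ⊤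

/-- Max-relative entropy (base 2). -/
def dMax (ρ σ : Matrix n n ℂ) : EReal :=
  sInf {x : EReal | ∃ lam : ℝ, x = (lam : EReal) ∧ loewnerLE ρ ((((2:ℝ) ^ lam : ℝ) : ℂ) • σ)}

/-- Uhlmann fidelity. -/
def fidelity (ρ σ : Matrix n n ℂ) : ℝ := (rtr (msqrt (msqrt σ * ρ * msqrt σ))) ^ 2

/-- Sine (purified) distance. -/
def sineDist (ρ σ : Matrix n n ℂ) : ℝ := Real.sqrt (1 - fidelity ρ σ)

/-- Smoothed max-relative entropy: smoothing over states in the sine-distance ball. -/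
def dMaxSmooth (δ : ℝ) (ρ σ : Matrix n n ℂ) : EReal :=
  ⨅ (ρ' : Matrix n n ℂ) (_ : IsState ρ' ∧ sineDist ρ ρ' ≤ δ), dMax ρ' σ

/-- Hypothesis testing divergence (base 2). -/
def dH (ε : ℝ) (ρ σ : Matrix n n ℂ) : EReal :=
  - elog (sInf {x : ℝ | ∃ T : Matrix n n ℂ,
      T.PosSemidef ∧ ((1 : Matrix n n ℂ) - T).PosSemidef ∧ 1 - ε ≤ rtr (T * ρ) ∧ x = rtr (T * σ)})

/-- The quantity `c_γ(ρ‖σ)`. -/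
def cGamma (γ : ℝ) (ρ σ : Matrix n n ℂ) : EReal :=
  ((γ⁻¹ : ℝ) : EReal) *
    elogE (epow2 ((γ : ℝ) * petzRenyi (1 + γ) ρ σ) +
           epow2 (((-γ : ℝ) : EReal) * petzRenyi (1 - γ) ρ σ) + 1)

/-- Binary entropy (base 2). -/
def binEnt (x : ℝ) : ℝ := -(x * Real.logb 2 x) - (1 - x) * Real.logb 2 (1 - x)

/-- Action of `id_k ⊗ Φ` on block matrices. -/
def blockApply {k : Type} (Φ : Matrix n n ℂ →ₗ[ℂ] Matrix m m ℂ)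
    (M : Matrix (k × n) (k × n) ℂ) : Matrix (k × m) (k × m) ℂ :=
  Matrix.of fun p q => Φ (Matrix.of fun a b => M (p.1, a) (q.1, b)) p.2 q.2

/-- Action of `Φ ⊗ id_k` on block matrices. -/
def blockApplyRight {k : Type} (Φ : Matrix n n ℂ →ₗ[ℂ] Matrix m m ℂ)
    (M : Matrix (n × k) (n × k) ℂ) : Matrix (m × k) (m × k) ℂ :=
  Matrix.of fun p q => Φ (Matrix.of fun a b => M (a, p.2) (b, q.2)) p.1 q.1

/-- Quantum channel: trace preserving and completely positive. -/
def IsQChannel (Φ : Matrix n n ℂ →ₗ[ℂ] Matrix m m ℂ) : Prop :=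
  (∀ M : Matrix n n ℂ, (Φ M).trace = M.trace) ∧
  (∀ k : ℕ, 1 ≤ k → ∀ M : Matrix (Fin k × n) (Fin k × n) ℂ, M.PosSemidef →
    (blockApply Φ M).PosSemidef)

/-- `id_k ⊗ Φ` as a linear map. -/
def blockApplyL (k : Type) (Φ : Matrix n n ℂ →ₗ[ℂ] Matrix m m ℂ) :
    Matrix (k × n) (k × n) ℂ →ₗ[ℂ] Matrix (k × m) (k × m) ℂ where
  toFun := blockApply Φ
  map_add' M N := by
    ext p q
    show Φ (Matrix.of fun a b => (M + N) (p.1, a) (q.1, b)) p.2 q.2 = _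
    have h : (Matrix.of fun a b => (M + N) (p.1, a) (q.1, b)) =
        (Matrix.of fun a b => M (p.1, a) (q.1, b)) +
          (Matrix.of fun a b => N (p.1, a) (q.1, b)) := rfl
    rw [h, map_add]
    rfl
  map_smul' c M := by
    ext p q
    show Φ (Matrix.of fun a b => (c • M) (p.1, a) (q.1, b)) p.2 q.2 = _
    have h : (Matrix.of fun a b => (c • M) (p.1, a) (q.1, b)) =
        c • (Matrix.of fun a b => M (p.1, a) (q.1, b)) := rfl
    rw [h, map_smul]
    rfl

/-- `Φ ⊗ id_k` as a linear map. -/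
def blockApplyRightL (k : Type) (Φ : Matrix n n ℂ →ₗ[ℂ] Matrix m m ℂ) :
    Matrix (n × k) (n × k) ℂ →ₗ[ℂ] Matrix (m × k) (m × k) ℂ where
  toFun := blockApplyRight Φ
  map_add' M N := by
    ext p q
    show Φ (Matrix.of fun a b => (M + N) (a, p.2) (b, q.2)) p.1 q.1 = _
    have h : (Matrix.of fun a b => (M + N) (a, p.2) (b, q.2)) =
        (Matrix.of fun a b => M (a, p.2) (b, q.2)) +
          (Matrix.of fun a b => N (a, p.2) (b, q.2)) := rfl
    rw [h, map_add]
    rfl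
  map_smul' c M := by
    ext p q
    show Φ (Matrix.of fun a b => (c • M) (a, p.2) (b, q.2)) p.1 q.1 = _
    have h : (Matrix.of fun a b => (c • M) (a, p.2) (b, q.2)) =
        c • (Matrix.of fun a b => M (a, p.2) (b, q.2)) := rfl
    rw [h, map_smul]
    rfl

/-- Tensor product of two channels (Kronecker product action). -/
def tensorChannel {n₁ m₁ n₂ m₂ : Type}
    (E₁ : Matrix n₁ n₁ ℂ →ₗ[ℂ] Matrix m₁ m₁ ℂ) (E₂ : Matrix n₂ n₂ ℂ →ₗ[ℂ] Matrix m₂ m₂ ℂ) :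
    Matrix (n₁ × n₂) (n₁ × n₂) ℂ →ₗ[ℂ] Matrix (m₁ × m₂) (m₁ × m₂) ℂ :=
  (blockApplyRightL m₂ E₁).comp (blockApplyL n₁ E₂)

/-- Index type for `k`-fold tensor powers. -/
def tpow (ι : Type) : ℕ → Type
  | 0 => PUnit
  | (k+1) => tpow ι k × ι

def tpowFintype (ι : Type) [Fintype ι] : ∀ k : ℕ, Fintype (tpow ι k)
  | 0 => inferInstanceAs (Fintype PUnit)
  | (k+1) => letI := tpowFintype ι k; inferInstanceAs (Fintype (tpow ι k × ι))

instance (ι : Type) [Fintype ι] (k : ℕ) : Fintype (tpow ι k) := tpowFintype ι k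

def tpowDecEq (ι : Type) [DecidableEq ι] : ∀ k : ℕ, DecidableEq (tpow ι k)
  | 0 => inferInstanceAs (DecidableEq PUnit)
  | (k+1) => letI := tpowDecEq ι k; inferInstanceAs (DecidableEq (tpow ι k × ι))

instance (ι : Type) [DecidableEq ι] (k : ℕ) : DecidableEq (tpow ι k) := tpowDecEq ι k

/-- `k`-fold Kronecker tensor power of a matrix. -/
def tpowMat (ρ : Matrix n n ℂ) : ∀ k : ℕ, Matrix (tpow n k) (tpow n k) ℂ
  | 0 => 1
  | (k+1) => (tpowMat ρ k) ⊗ₖ ρ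

/-- `k`-fold tensor power of a channel. -/
def tpowChannel (Φ : Matrix n n ℂ →ₗ[ℂ] Matrix m m ℂ) :
    ∀ k : ℕ, Matrix (tpow n k) (tpow n k) ℂ →ₗ[ℂ] Matrix (tpow m k) (tpow m k) ℂ
  | 0 => LinearMap.id
  | (k+1) => tensorChannel (tpowChannel Φ k) Φ

/-- Channel divergence induced by a divergence `𝔇` on states:
sup over `k ≥ 1` and input states `ν` on `ℂ^k ⊗ ℂ^d`. -/
def chDiv (𝔇 : ∀ (p : Type) [Fintype p] [DecidableEq p], Matrix p p ℂ → Matrix p p ℂ → EReal)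
    (E F : Matrix n n ℂ →ₗ[ℂ] Matrix m m ℂ) : EReal :=
  ⨆ (k : ℕ) (_ : 1 ≤ k) (ν : Matrix (Fin k × n) (Fin k × n) ℂ) (_ : IsState ν),
    𝔇 (Fin k × m) (blockApply E ν) (blockApply F ν)

/-- The geometric Rényi divergence as a divergence family. -/
def geomD (α : ℝ) : ∀ (p : Type) [Fintype p] [DecidableEq p],
    Matrix p p ℂ → Matrix p p ℂ → EReal :=
  fun _ _ _ => geomRenyi α

/-- The Umegaki relative entropy as a divergence family. -/
def relD : ∀ (p : Type) [Fintype p] [DecidableEq p],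
    Matrix p p ℂ → Matrix p p ℂ → EReal :=
  fun _ _ _ => relEntropy

/-- The hypothesis testing divergence as a divergence family. -/
def dHD (ε : ℝ) : ∀ (p : Type) [Fintype p] [DecidableEq p],
    Matrix p p ℂ → Matrix p p ℂ → EReal :=
  fun _ _ _ => dH ε

/-- Regularized channel relative entropy. -/
def regRelEntropy (E F : Matrix n n ℂ →ₗ[ℂ] Matrix m m ℂ) : EReal :=
  ⨆ (k : ℕ) (_ : 1 ≤ k),
    (((k : ℝ)⁻¹ : ℝ) : EReal) * chDiv relD (tpowChannel E k) (tpowChannel F k)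

end QCD

/-!
Diagonalize `ρ = ∑ᵢ lᵢ |uᵢ⟩⟨uᵢ|` and `σ = ∑ⱼ μⱼ |vⱼ⟩⟨vⱼ|`. The weights `|⟨uᵢ, vⱼ⟩|²` turn the pair
into two joint distributions `lᵢ |⟨uᵢ, vⱼ⟩|²` and `μⱼ |⟨uᵢ, vⱼ⟩|²` with the same relative entropy
(Nussbaum–Szkoła). The errors of a quantum test, with the second weighted by `c`, sum to at least
half of `∑ᵢⱼ min(lᵢ, c μⱼ) |⟨uᵢ, vⱼ⟩|²`, the optimum for the classical pair; this yields the
one-shot bound `D_H^ε ≤ (D + 3) / (1 - 3ε) + log (2 / ε)`. Conversely, for tensor powers,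
compress the projection onto the `uᵢ` with typically large `lᵢ` by the projection onto the `vⱼ`
with typically small `μⱼ`: Chernoff's bound shows that this test achieves
`k R ≤ D_H^ε(ρ^{⊗k} ‖ σ^{⊗k})` eventually, for every `R < D(ρ ‖ σ)`.

For channels, the one-shot bound applied to the outputs of `k` uses gives
`limsup ≤ D^reg / (1 - 3ε)`, and then `ε → 0`. Conversely, `N` uses contain `⌊N / l⌋` independent
copies of any input to `l` uses, so the bound for powers gives `D^reg ≤ liminf` for every `ε`.
-/

namespace QCD

open Filter Matrix Topology

section Spectral

variable {n : Type} [Fintype n]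

lemma rtr_mul_comm (A B : Matrix n n ℂ) : rtr (A * B) = rtr (B * A) := by
  rw [rtr, trace_mul_comm, rtr]

lemma rtr_sub (A B : Matrix n n ℂ) : rtr (A - B) = rtr A - rtr B := by
  simp [rtr]

lemma trace_submatrix_equiv {m : Type} [Fintype m] (A : Matrix n n ℂ) (e : m ≃ n) :
    (A.submatrix e e).trace = A.trace :=
  e.sum_comp fun i => A i i

lemma rtr_submatrix_equiv {m : Type} [Fintype m] (A : Matrix n n ℂ) (e : m ≃ n) :
    rtr (A.submatrix e e) = rtr A :=
  congrArg Complex.re (trace_submatrix_equiv A e)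

lemma IsState.rtr_eq_one {ρ : Matrix n n ℂ} (hρ : IsState ρ) : rtr ρ = 1 := by
  rw [rtr, hρ.2, Complex.one_re]

variable [DecidableEq n]

/-- The matrix with eigenvalues `l` and eigenvectors the columns of `U`. -/
def spectralMatrix (U : unitaryGroup n ℂ) (l : n → ℝ) : Matrix n n ℂ :=
  (U : Matrix n n ℂ) * diagonal (fun i => (l i : ℂ)) * (U : Matrix n n ℂ)ᴴ

/-- The Nussbaum–Szkoła weight `|⟨v_j, u_i⟩|²` of two orthonormal bases, given as the columns of
`U` and `V`. -/
def overlap (U V : unitaryGroup n ℂ) (i j : n) : ℝ :=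
  Complex.normSq (((V : Matrix n n ℂ)ᴴ * U) j i)

variable (U V : unitaryGroup n ℂ) (l g : n → ℝ)

lemma conjTranspose_mul_self_unitary : (U : Matrix n n ℂ)ᴴ * U = 1 :=
  Unitary.coe_star_mul_self U

lemma mul_conjTranspose_self_unitary : (U : Matrix n n ℂ) * (U : Matrix n n ℂ)ᴴ = 1 :=
  Unitary.coe_mul_star_self U

lemma spectralMatrix_one : spectralMatrix U 1 = 1 := by
  simp [spectralMatrix, mul_conjTranspose_self_unitary]

lemma spectralMatrix_sub : spectralMatrix U (l - g) = spectralMatrix U l - spectralMatrix U g := by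
  simp only [spectralMatrix, ← Matrix.sub_mul, ← Matrix.mul_sub, diagonal_sub, Pi.sub_apply,
    Complex.ofReal_sub]

lemma spectralMatrix_mul : spectralMatrix U l * spectralMatrix U g = spectralMatrix U (l * g) := by
  calc spectralMatrix U l * spectralMatrix U g
      = (U : Matrix n n ℂ) * diagonal (fun i => (l i : ℂ)) * ((U : Matrix n n ℂ)ᴴ * U) *
          diagonal (fun i => (g i : ℂ)) * (U : Matrix n n ℂ)ᴴ := by
        simp only [spectralMatrix, Matrix.mul_assoc]
    _ = spectralMatrix U (l * g) := by
        simp only [conjTranspose_mul_self_unitary, Matrix.mul_one, spectralMatrix,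
          Matrix.mul_assoc (U : Matrix n n ℂ) (diagonal _), diagonal_mul_diagonal, Pi.mul_apply,
          Complex.ofReal_mul]

lemma rtr_spectralMatrix : rtr (spectralMatrix U l) = ∑ i, l i := by
  rw [spectralMatrix, rtr_mul_comm, ← Matrix.mul_assoc, conjTranspose_mul_self_unitary,
    Matrix.one_mul]
  simp [rtr, trace_diagonal]

variable {l} in
lemma posSemidef_spectralMatrix (hl : ∀ i, 0 ≤ l i) : (spectralMatrix U l).PosSemidef :=
  (PosSemidef.diagonal fun i => Complex.zero_le_real.mpr (hl i)).mul_mul_conjTranspose_same _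

lemma exists_spectralMatrix {ρ : Matrix n n ℂ} (hρ : ρ.PosSemidef) :
    ∃ (U : unitaryGroup n ℂ) (l : n → ℝ), (∀ i, 0 ≤ l i) ∧ ρ = spectralMatrix U l ∧
      mlog ρ = spectralMatrix U (fun i => Real.logb 2 (l i)) := by
  refine ⟨hρ.1.eigenvectorUnitary, hρ.1.eigenvalues, hρ.eigenvalues_nonneg, ?_, dif_pos hρ.1⟩
  have hspec := hρ.1.spectral_theorem
  rwa [Unitary.conjStarAlgAut_apply] at hspec

lemma rtr_mul_spectralMatrix (A : Matrix n n ℂ) :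
    rtr (A * spectralMatrix U l) = ∑ i, l i * (((U : Matrix n n ℂ)ᴴ * A * U) i i).re := by
  have hcyc : rtr (A * spectralMatrix U l)
      = rtr (diagonal (fun i => (l i : ℂ)) * ((U : Matrix n n ℂ)ᴴ * A * (U : Matrix n n ℂ))) := by
    rw [rtr_mul_comm, spectralMatrix, Matrix.mul_assoc, Matrix.mul_assoc, rtr_mul_comm]
    simp only [Matrix.mul_assoc]
  rw [hcyc]
  simp [rtr, trace, diagonal_mul]

lemma conjTranspose_mul_spectralMatrix_mul_apply (H : Matrix n n ℂ) (i : n) :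
    (Hᴴ * spectralMatrix V g * H) i i
      = ((∑ j, g j * Complex.normSq (((V : Matrix n n ℂ)ᴴ * H) j i) : ℝ) : ℂ) := by
  have hassoc : Hᴴ * spectralMatrix V g * H
      = ((V : Matrix n n ℂ)ᴴ * H)ᴴ *
        (diagonal (fun j => (g j : ℂ)) * ((V : Matrix n n ℂ)ᴴ * H)) := by
    simp only [spectralMatrix, conjTranspose_mul, conjTranspose_conjTranspose, Matrix.mul_assoc]
  rw [hassoc, Matrix.mul_apply, Complex.ofReal_sum]
  refine Finset.sum_congr rfl fun j _ => ?_
  rw [conjTranspose_apply, diagonal_mul, Complex.ofReal_mul, Complex.normSq_eq_conj_mul_self,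
    starRingEnd_apply]
  ring

lemma rtr_conjTranspose_mul_spectralMatrix_mul (H : Matrix n n ℂ) :
    rtr (Hᴴ * spectralMatrix V g * H * spectralMatrix U l)
      = ∑ i, ∑ j, l i * g j * Complex.normSq (((V : Matrix n n ℂ)ᴴ * H * U) j i) := by
  rw [rtr_mul_spectralMatrix]
  refine Finset.sum_congr rfl fun i _ => ?_
  have hH : (U : Matrix n n ℂ)ᴴ * (Hᴴ * spectralMatrix V g * H) * U
      = (H * (U : Matrix n n ℂ))ᴴ * spectralMatrix V g * (H * U) := by
    simp only [conjTranspose_mul, Matrix.mul_assoc]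
  rw [hH, conjTranspose_mul_spectralMatrix_mul_apply, Complex.ofReal_re, Finset.mul_sum]
  simp only [mul_assoc]

lemma overlap_nonneg (i j : n) : 0 ≤ overlap U V i j := Complex.normSq_nonneg _

lemma overlap_comm (i j : n) : overlap U V i j = overlap V U j i := by
  have hstar : ((V : Matrix n n ℂ)ᴴ * (U : Matrix n n ℂ))ᴴ = (U : Matrix n n ℂ)ᴴ * V := by
    rw [conjTranspose_mul, conjTranspose_conjTranspose]
  rw [overlap, overlap, ← hstar, conjTranspose_apply, ← starRingEnd_apply, Complex.normSq_conj]

lemma sum_mul_overlap_left (j : n) :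
    ((∑ i, l i * overlap U V i j : ℝ) : ℂ)
      = ((V : Matrix n n ℂ)ᴴ * spectralMatrix U l * (V : Matrix n n ℂ)) j j := by
  simp only [overlap_comm U V]
  exact (conjTranspose_mul_spectralMatrix_mul_apply U l V j).symm

lemma sum_overlap_left (j : n) : ∑ i, overlap U V i j = 1 := by
  have h := sum_mul_overlap_left U V 1 j
  rw [spectralMatrix_one, Matrix.mul_one, conjTranspose_mul_self_unitary, one_apply_eq] at h
  simpa only [Pi.one_apply, one_mul, Complex.ofReal_eq_one] using h

lemma sum_overlap_right (i : n) : ∑ j, overlap U V i j = 1 := by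
  simpa only [overlap_comm U V] using sum_overlap_left V U i

lemma rtr_spectralMatrix_mul_spectralMatrix :
    rtr (spectralMatrix U l * spectralMatrix V g) = ∑ i, ∑ j, l i * g j * overlap U V i j := by
  simpa [overlap, rtr_mul_comm (spectralMatrix V g)] using
    rtr_conjTranspose_mul_spectralMatrix_mul U V l g 1

lemma rtr_spectralMatrix_mul_sub (f : n → ℝ) :
    rtr (spectralMatrix U l * (spectralMatrix U f - spectralMatrix V g))
      = ∑ i, ∑ j, l i * (f i - g j) * overlap U V i j := by
  have hrow : ∑ i, l i * f i = ∑ i, ∑ j, l i * f i * overlap U V i j := by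
    simp only [← Finset.mul_sum, sum_overlap_right, mul_one]
  rw [Matrix.mul_sub, rtr_sub, spectralMatrix_mul, rtr_spectralMatrix,
    rtr_spectralMatrix_mul_spectralMatrix]
  simp only [Pi.mul_apply, hrow, mul_sub, sub_mul, Finset.sum_sub_distrib]

end Spectral

lemma rtr_mul_nonneg {n : Type} [Fintype n] {A B : Matrix n n ℂ} (hA : A.PosSemidef)
    (hB : B.PosSemidef) : 0 ≤ rtr (A * B) := by
  classical
  obtain ⟨U, l, hl, rfl, -⟩ := exists_spectralMatrix hB
  rw [rtr_mul_spectralMatrix]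
  exact Finset.sum_nonneg fun i _ => mul_nonneg (hl i)
    (Complex.nonneg_iff.mp (hA.conjTranspose_mul_mul_same _).diag_nonneg).1

section Effects

variable {n : Type} [DecidableEq n]

/-- An effect `0 ≤ T ≤ 1`, that is, the acceptance operator of a binary test. -/
def IsEffect (T : Matrix n n ℂ) : Prop := T.PosSemidef ∧ (1 - T).PosSemidef

namespace IsEffect

variable {T : Matrix n n ℂ}

lemma one : IsEffect (1 : Matrix n n ℂ) := ⟨.one, by rw [sub_self]; exact .zero⟩

lemma one_sub (hT : IsEffect T) : IsEffect (1 - T) := ⟨hT.2, by rw [sub_sub_cancel]; exact hT.1⟩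

lemma submatrix_equiv {m : Type} [DecidableEq m] (hT : IsEffect T) (e : m ≃ n) :
    IsEffect (T.submatrix e e) := by
  refine ⟨hT.1.submatrix e, ?_⟩
  simpa only [submatrix_sub, Pi.sub_apply, submatrix_one_equiv] using hT.2.submatrix e

variable [Fintype n]

lemma posSemidef_sub_mul_self (hT : IsEffect T) : (T - T * T).PosSemidef := by
  have hdecomp : T - T * T = Tᴴ * (1 - T) * T + (1 - T)ᴴ * T * (1 - T) := by
    rw [hT.1.1.eq, hT.2.1.eq]
    noncomm_ring
  rw [hdecomp]
  exact (hT.2.conjTranspose_mul_mul_same T).add (hT.1.conjTranspose_mul_mul_same (1 - T))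

lemma rtr_mul_self_mul_le (hT : IsEffect T) {ρ : Matrix n n ℂ} (hρ : ρ.PosSemidef) :
    rtr (T * T * ρ) ≤ rtr (T * ρ) := by
  have h := rtr_mul_nonneg hT.posSemidef_sub_mul_self hρ
  rw [Matrix.sub_mul, rtr_sub] at h
  linarith

lemma conj {Q : Matrix n n ℂ} (hQ : IsEffect Q) (hT : IsEffect T) : IsEffect (Q * T * Q) := by
  have hQTQ := hT.1.conjTranspose_mul_mul_same Q
  have hcompl := hT.2.conjTranspose_mul_mul_same Q
  rw [hQ.1.1.eq] at hQTQ hcompl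
  refine ⟨hQTQ, ?_⟩
  have hdecomp : 1 - Q * T * Q = (1 - Q) + (Q - Q * Q) + Q * (1 - T) * Q := by noncomm_ring
  rw [hdecomp]
  exact (hQ.2.add hQ.posSemidef_sub_mul_self).add hcompl

lemma kronecker_one (m : Type) [Fintype m] [DecidableEq m] (hT : IsEffect T) :
    IsEffect (T ⊗ₖ (1 : Matrix m m ℂ)) := by
  refine ⟨hT.1.kronecker .one, ?_⟩
  have hdecomp : 1 - T ⊗ₖ (1 : Matrix m m ℂ) = (1 - T) ⊗ₖ 1 := by
    rw [sub_eq_iff_eq_add, ← add_kronecker, sub_add_cancel, one_kronecker_one]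
  rw [hdecomp]
  exact hT.2.kronecker .one

end IsEffect

end Effects

section OneShotTest

variable {n : Type} [Fintype n] [DecidableEq n] (U V : unitaryGroup n ℂ)

/-- The projection onto the span of the columns of `U` with index in `I`. -/
def spectralProj (I : Finset n) : Matrix n n ℂ :=
  spectralMatrix U (fun i => if i ∈ I then 1 else 0)

lemma isEffect_spectralProj (I : Finset n) : IsEffect (spectralProj U I) := by
  refine ⟨posSemidef_spectralMatrix U fun i => by positivity, ?_⟩
  rw [← spectralMatrix_one U, spectralProj, ← spectralMatrix_sub]
  refine posSemidef_spectralMatrix U fun i => sub_nonneg.mpr ?_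
  dsimp only [Pi.one_apply]
  split_ifs <;> simp

lemma le_rtr_pinched_mul_spectralMatrix {l : n → ℝ} (hl : ∀ i, 0 ≤ l i) (I J : Finset n) :
    2 * ∑ i ∈ I, ∑ j ∈ J, l i * overlap U V i j - ∑ i, l i
      ≤ rtr (spectralProj V J * spectralProj U I * spectralProj V J * spectralMatrix U l) := by
  set Q := spectralProj V J with hQ
  set q : n → ℝ := fun i => ∑ j ∈ J, overlap U V i j with hq
  have hdiag (i : n) : ((U : Matrix n n ℂ)ᴴ * Q * U) i i = (q i : ℂ) := by
    rw [hQ, spectralProj, ← sum_mul_overlap_left]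
    simp [hq, overlap_comm U V]
  have hsum : rtr (Q * spectralProj U I * Q * spectralMatrix U l)
      = ∑ i, ∑ k ∈ I, l i * Complex.normSq (((U : Matrix n n ℂ)ᴴ * Q * U) k i) := by
    have h := rtr_conjTranspose_mul_spectralMatrix_mul U U l (fun i => if i ∈ I then 1 else 0) Q
    rw [(isEffect_spectralProj V J).1.1.eq, ← hQ] at h
    rw [spectralProj]
    simpa only [mul_ite, mul_one, mul_zero, ite_mul, zero_mul, Finset.sum_ite_mem,
      Finset.univ_inter] using h
  have hterm (i k : n) : 0 ≤ l i * Complex.normSq (((U : Matrix n n ℂ)ᴴ * Q * U) k i) :=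
    mul_nonneg (hl i) (Complex.normSq_nonneg _)
  calc 2 * ∑ i ∈ I, ∑ j ∈ J, l i * overlap U V i j - ∑ i, l i
      ≤ 2 * ∑ i ∈ I, ∑ j ∈ J, l i * overlap U V i j - ∑ i ∈ I, l i := by
        exact sub_le_sub_left (Finset.sum_le_univ_sum_of_nonneg hl) _
    _ = ∑ i ∈ I, l i * (2 * q i - 1) := by
        simp only [hq, ← Finset.mul_sum, mul_sub, Finset.sum_sub_distrib, mul_one,
          mul_left_comm _ (2 : ℝ)]
    _ ≤ ∑ i ∈ I, l i * Complex.normSq (((U : Matrix n n ℂ)ᴴ * Q * U) i i) := by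
        gcongr with i
        · exact hl i
        · rw [hdiag, Complex.normSq_ofReal]
          nlinarith [sq_nonneg (q i - 1)]
    _ ≤ ∑ i ∈ I, ∑ k ∈ I, l i * Complex.normSq (((U : Matrix n n ℂ)ᴴ * Q * U) k i) :=
        Finset.sum_le_sum fun i hi => Finset.single_le_sum (fun k _ => hterm i k) hi
    _ ≤ ∑ i, ∑ k ∈ I, l i * Complex.normSq (((U : Matrix n n ℂ)ᴴ * Q * U) k i) :=
        Finset.sum_le_univ_sum_of_nonneg fun i => Finset.sum_nonneg fun k _ => hterm i k
    _ = _ := hsum.symm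

lemma rtr_pinched_mul_spectralMatrix (I J : Finset n) (μ : n → ℝ) :
    rtr (spectralProj V J * spectralProj U I * spectralProj V J * spectralMatrix V μ)
      = ∑ i ∈ I, ∑ j ∈ J, μ j * overlap U V i j := by
  rw [Matrix.mul_assoc, Matrix.mul_assoc, rtr_mul_comm, Matrix.mul_assoc, spectralProj,
    spectralProj, spectralMatrix_mul, spectralMatrix_mul, rtr_spectralMatrix_mul_spectralMatrix]
  simp

lemma exists_isEffect_of_le_mul {l μ : n → ℝ} {c : ℝ} (hl : ∀ i, 0 ≤ l i) (hc : 0 ≤ c)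
    {I J : Finset n} (h : ∀ i ∈ I, ∀ j ∈ J, μ j ≤ c * l i) :
    ∃ T : Matrix n n ℂ, IsEffect T ∧
      2 * ∑ i ∈ I, ∑ j ∈ J, l i * overlap U V i j - ∑ i, l i ≤ rtr (T * spectralMatrix U l) ∧
      rtr (T * spectralMatrix V μ) ≤ c * ∑ i, l i := by
  refine ⟨_, (isEffect_spectralProj V J).conj (isEffect_spectralProj U I),
    le_rtr_pinched_mul_spectralMatrix U V hl I J, ?_⟩
  calc rtr (spectralProj V J * spectralProj U I * spectralProj V J * spectralMatrix V μ)
      = ∑ i ∈ I, ∑ j ∈ J, μ j * overlap U V i j := rtr_pinched_mul_spectralMatrix U V I J μ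
    _ ≤ ∑ i ∈ I, ∑ j ∈ J, c * l i * overlap U V i j :=
        Finset.sum_le_sum fun i hi => Finset.sum_le_sum fun j hj =>
          mul_le_mul_of_nonneg_right (h i hi j hj) (overlap_nonneg U V i j)
    _ ≤ ∑ i ∈ I, ∑ j, c * l i * overlap U V i j :=
        Finset.sum_le_sum fun i _ => Finset.sum_le_univ_sum_of_nonneg fun j =>
          mul_nonneg (mul_nonneg hc (hl i)) (overlap_nonneg U V i j)
    _ = c * ∑ i ∈ I, l i := by simp only [← Finset.mul_sum, sum_overlap_right, mul_one]
    _ ≤ c * ∑ i, l i := mul_le_mul_of_nonneg_left (Finset.sum_le_univ_sum_of_nonneg hl) hc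

end OneShotTest

section OneShotConverse

variable {n : Type} [Fintype n] [DecidableEq n]

lemma normSq_add_le (x y : ℂ) :
    Complex.normSq (x + y) ≤ 2 * (Complex.normSq x + Complex.normSq y) := by
  simp only [Complex.normSq_apply, Complex.add_re, Complex.add_im]
  linarith [sq_nonneg (x.re - y.re), sq_nonneg (x.im - y.im)]

lemma IsEffect.sum_mul_normSq_le {T : Matrix n n ℂ} (hT : IsEffect T) (U V : unitaryGroup n ℂ)
    {l : n → ℝ} (hl : ∀ i, 0 ≤ l i) :
    ∑ i, ∑ j, l i * Complex.normSq (((V : Matrix n n ℂ)ᴴ * T * U) j i)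
      ≤ rtr (T * spectralMatrix U l) := by
  have h := rtr_conjTranspose_mul_spectralMatrix_mul U V l 1 T
  simp only [spectralMatrix_one, mul_one, hT.1.1.eq, Pi.one_apply] at h
  exact h ▸ hT.rtr_mul_self_mul_le (posSemidef_spectralMatrix U hl)

lemma IsEffect.sum_min_mul_overlap_le {T : Matrix n n ℂ} (hT : IsEffect T)
    (U V : unitaryGroup n ℂ) {l μ : n → ℝ} (hl : ∀ i, 0 ≤ l i) (hμ : ∀ j, 0 ≤ μ j) {c : ℝ}
    (hc : 0 ≤ c) :
    ∑ i, ∑ j, min (l i) (c * μ j) * overlap U V i j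
      ≤ 2 * (rtr ((1 - T) * spectralMatrix U l) + c * rtr (T * spectralMatrix V μ)) := by
  set X : Matrix n n ℂ := (V : Matrix n n ℂ)ᴴ * (1 - T) * (U : Matrix n n ℂ) with hX
  set Y : Matrix n n ℂ := (V : Matrix n n ℂ)ᴴ * T * (U : Matrix n n ℂ) with hY
  have hadd : (V : Matrix n n ℂ)ᴴ * (U : Matrix n n ℂ) = X + Y := by
    rw [hX, hY, ← Matrix.add_mul, ← Matrix.mul_add, sub_add_cancel, Matrix.mul_one]
  have hYstar : (U : Matrix n n ℂ)ᴴ * T * (V : Matrix n n ℂ) = Yᴴ := by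
    rw [hY, conjTranspose_mul, conjTranspose_mul, conjTranspose_conjTranspose, hT.1.1.eq,
      Matrix.mul_assoc]
  have hterm (i j : n) : min (l i) (c * μ j) * overlap U V i j
      ≤ 2 * (l i * Complex.normSq (X j i) + c * (μ j * Complex.normSq (Y j i))) := by
    have hmin : 0 ≤ min (l i) (c * μ j) := le_min (hl i) (mul_nonneg hc (hμ j))
    calc min (l i) (c * μ j) * overlap U V i j
        ≤ min (l i) (c * μ j) * (2 * (Complex.normSq (X j i) + Complex.normSq (Y j i))) := by
          rw [overlap, hadd, Matrix.add_apply]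
          exact mul_le_mul_of_nonneg_left (normSq_add_le _ _) hmin
      _ ≤ 2 * (l i * Complex.normSq (X j i) + c * (μ j * Complex.normSq (Y j i))) := by
          linarith [mul_le_mul_of_nonneg_right (min_le_left (l i) (c * μ j))
              (Complex.normSq_nonneg (X j i)),
            mul_le_mul_of_nonneg_right (min_le_right (l i) (c * μ j))
              (Complex.normSq_nonneg (Y j i))]
  have hreject := hT.one_sub.sum_mul_normSq_le U V hl
  have haccept : ∑ i, ∑ j, μ j * Complex.normSq (Y j i) ≤ rtr (T * spectralMatrix V μ) := by
    rw [Finset.sum_comm]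
    simpa only [hYstar, conjTranspose_apply, ← starRingEnd_apply, Complex.normSq_conj] using
      hT.sum_mul_normSq_le V U hμ
  calc _ ≤ ∑ i, ∑ j, 2 * (l i * Complex.normSq (X j i) + c * (μ j * Complex.normSq (Y j i))) :=
        Finset.sum_le_sum fun i _ => Finset.sum_le_sum fun j _ => hterm i j
    _ = 2 * (∑ i, ∑ j, l i * Complex.normSq (X j i)
          + c * ∑ i, ∑ j, μ j * Complex.normSq (Y j i)) := by
        simp only [← Finset.mul_sum, Finset.sum_add_distrib]
    _ ≤ _ := by gcongr

end OneShotConverse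

section HypothesisTesting

lemma elog_mono : Monotone elog := by
  intro x y hxy
  rw [elog, elog]
  split_ifs with hx hy hy
  · exact le_rfl
  · exact bot_le
  · exact absurd (hxy.trans hy) hx
  · exact EReal.coe_le_coe_iff.mpr
      (Real.logb_le_logb_of_le one_lt_two (not_le.mp hx) hxy)

lemma elog_two_rpow (x : ℝ) : elog (2 ^ x) = x := by
  rw [elog, if_neg (Real.rpow_pos_of_pos two_pos x).not_ge,
    Real.logb_rpow two_pos (OfNat.ofNat_ne_one 2)]

variable {n m : Type} [Fintype n] [DecidableEq n] [Fintype m] [DecidableEq m]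
  {ρ σ : Matrix n n ℂ} {ε : ℝ}

/-- The errors of the second kind of the tests whose error of the first kind is at most `ε`. -/
def typeIIErrors (ε : ℝ) (ρ σ : Matrix n n ℂ) : Set ℝ :=
  {x | ∃ T : Matrix n n ℂ, T.PosSemidef ∧ (1 - T).PosSemidef ∧ 1 - ε ≤ rtr (T * ρ) ∧
    x = rtr (T * σ)}

lemma dH_eq_neg_elog_sInf : dH ε ρ σ = -elog (sInf (typeIIErrors ε ρ σ)) := rfl

lemma typeIIErrors_nonempty (hρ : IsState ρ) (σ : Matrix n n ℂ) (hε : 0 ≤ ε) :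
    (typeIIErrors ε ρ σ).Nonempty :=
  ⟨_, 1, IsEffect.one.1, IsEffect.one.2,
    by rw [Matrix.one_mul, hρ.rtr_eq_one]; exact sub_le_self 1 hε, rfl⟩

lemma typeIIErrors_bddBelow (ρ : Matrix n n ℂ) (hσ : σ.PosSemidef) :
    BddBelow (typeIIErrors ε ρ σ) := by
  refine ⟨0, ?_⟩
  rintro _ ⟨T, hT, -, -, rfl⟩
  exact rtr_mul_nonneg hT hσ

lemma dH_le_of_forall_isEffect (hρ : IsState ρ) (hε : 0 ≤ ε) {r : ℝ}
    (h : ∀ T, IsEffect T → 1 - ε ≤ rtr (T * ρ) → 2 ^ (-r) ≤ rtr (T * σ)) : dH ε ρ σ ≤ r := by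
  have hinf : 2 ^ (-r) ≤ sInf (typeIIErrors ε ρ σ) := by
    refine le_csInf (typeIIErrors_nonempty hρ σ hε) ?_
    rintro _ ⟨T, hT, hT', hTρ, rfl⟩
    exact h T ⟨hT, hT'⟩ hTρ
  rw [dH_eq_neg_elog_sInf, EReal.neg_le, ← EReal.coe_neg, ← elog_two_rpow]
  exact elog_mono hinf

lemma IsEffect.le_dH {T : Matrix n n ℂ} (hT : IsEffect T) (hσ : σ.PosSemidef)
    (hTρ : 1 - ε ≤ rtr (T * ρ)) {r : ℝ} (hTσ : rtr (T * σ) ≤ 2 ^ (-r)) : r ≤ dH ε ρ σ := by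
  have hinf : sInf (typeIIErrors ε ρ σ) ≤ 2 ^ (-r) :=
    (csInf_le (typeIIErrors_bddBelow ρ hσ) ⟨T, hT.1, hT.2, hTρ, rfl⟩).trans hTσ
  rw [dH_eq_neg_elog_sInf, EReal.le_neg, ← EReal.coe_neg, ← elog_two_rpow]
  exact elog_mono hinf

lemma dH_mono_of_forall_isEffect {ρ' σ' : Matrix m m ℂ} (hρ : IsState ρ) (hσ' : σ'.PosSemidef)
    (hε : 0 ≤ ε)
    (h : ∀ T, IsEffect T → 1 - ε ≤ rtr (T * ρ) →
      ∃ T', IsEffect T' ∧ 1 - ε ≤ rtr (T' * ρ') ∧ rtr (T' * σ') ≤ rtr (T * σ)) :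
    dH ε ρ σ ≤ dH ε ρ' σ' := by
  refine EReal.neg_le_neg_iff.mpr (elog_mono ?_)
  refine le_csInf (typeIIErrors_nonempty hρ σ hε) ?_
  rintro _ ⟨T, hT, hT', hTρ, rfl⟩
  obtain ⟨T', hT'eff, hTρ', hTσ'⟩ := h T ⟨hT, hT'⟩ hTρ
  exact (csInf_le (typeIIErrors_bddBelow ρ' hσ') ⟨T', hT'eff.1, hT'eff.2, hTρ', rfl⟩).trans hTσ'

lemma dH_submatrix_equiv_le (hσ : σ.PosSemidef) (e : m ≃ n)
    (hρ : IsState (ρ.submatrix e e)) (hε : 0 ≤ ε) :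
    dH ε (ρ.submatrix e e) (σ.submatrix e e) ≤ dH ε ρ σ := by
  have htest (T : Matrix m m ℂ) (A : Matrix n n ℂ) :
      rtr (T.submatrix e.symm e.symm * A) = rtr (T * A.submatrix e e) := by
    rw [← rtr_submatrix_equiv _ e, ← submatrix_mul_equiv _ _ _ e]
    simp
  exact dH_mono_of_forall_isEffect hρ hσ hε fun T hT hTρ =>
    ⟨_, hT.submatrix_equiv e.symm, by rwa [htest], (htest T σ).le⟩

lemma dH_le_dH_kronecker {ρ' σ' : Matrix m m ℂ} (hρ : IsState ρ) (hσ : σ.PosSemidef)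
    (hρ' : IsState ρ') (hσ' : IsState σ') (hε : 0 ≤ ε) :
    dH ε ρ σ ≤ dH ε (ρ ⊗ₖ ρ') (σ ⊗ₖ σ') := by
  have htest (T A : Matrix n n ℂ) {B : Matrix m m ℂ} (hB : IsState B) :
      rtr (T ⊗ₖ (1 : Matrix m m ℂ) * A ⊗ₖ B) = rtr (T * A) := by
    rw [← mul_kronecker_mul, rtr, trace_kronecker, Matrix.one_mul, hB.2, mul_one, rtr]
  exact dH_mono_of_forall_isEffect hρ (hσ.kronecker hσ'.1) hε fun T hT hTρ =>
    ⟨_, hT.kronecker_one m, by rwa [htest T ρ hρ'], (htest T σ hσ').le⟩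

end HypothesisTesting

section RelativeEntropy

variable {n : Type} [Fintype n] [DecidableEq n]

lemma spectralMatrix_mulVec_eq_zero_iff (U : unitaryGroup n ℂ) (l : n → ℝ) (v : n → ℂ) :
    spectralMatrix U l *ᵥ v = 0 ↔ ∀ i, l i = 0 ∨ ((U : Matrix n n ℂ)ᴴ *ᵥ v) i = 0 := by
  have hinj : spectralMatrix U l *ᵥ v = 0 ↔
      diagonal (fun i => (l i : ℂ)) *ᵥ ((U : Matrix n n ℂ)ᴴ *ᵥ v) = 0 := by
    rw [spectralMatrix, ← mulVec_mulVec, ← mulVec_mulVec]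
    refine ⟨fun h => ?_, fun h => by rw [h, mulVec_zero]⟩
    have h' := congrArg ((U : Matrix n n ℂ)ᴴ *ᵥ ·) h
    simpa only [mulVec_mulVec, ← Matrix.mul_assoc, conjTranspose_mul_self_unitary, Matrix.one_mul,
      mulVec_zero] using h'
  simp only [hinj, funext_iff, mulVec_diagonal, Pi.zero_apply, mul_eq_zero, Complex.ofReal_eq_zero]

lemma suppLE_spectralMatrix_iff (U V : unitaryGroup n ℂ) (l μ : n → ℝ) :
    SuppLE (spectralMatrix U l) (spectralMatrix V μ) ↔
      ∀ i j, μ j = 0 → l i * overlap U V i j = 0 := by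
  have hoverlap (i j : n) : overlap U V i j = 0 ↔ ((U : Matrix n n ℂ)ᴴ * V) i j = 0 := by
    rw [overlap_comm, overlap, Complex.normSq_eq_zero]
  simp only [SuppLE, spectralMatrix_mulVec_eq_zero_iff, mul_eq_zero, hoverlap]
  constructor
  · intro h i j hj
    have hcol := h ((V : Matrix n n ℂ) *ᵥ Pi.single j 1) fun k => by
      rw [mulVec_mulVec, conjTranspose_mul_self_unitary, one_mulVec, Pi.single_apply]
      split_ifs with hkj
      · exact .inl (hkj ▸ hj)
      · exact .inr rfl
    rw [mulVec_mulVec, mulVec_single_one] at hcol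
    exact hcol i
  · intro h v hv i
    have hcoord : (U : Matrix n n ℂ)ᴴ *ᵥ v
        = ((U : Matrix n n ℂ)ᴴ * (V : Matrix n n ℂ)) *ᵥ ((V : Matrix n n ℂ)ᴴ *ᵥ v) := by
      rw [mulVec_mulVec, Matrix.mul_assoc, mul_conjTranspose_self_unitary, Matrix.mul_one]
    refine or_iff_not_imp_left.mpr fun hi => ?_
    rw [hcoord]
    refine Finset.sum_eq_zero fun j _ => ?_
    rcases hv j with hj | hj
    · exact mul_eq_zero_of_left ((h i j hj).resolve_left hi) _
    · exact mul_eq_zero_of_right _ hj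

lemma neg_two_mul_le_mul_logb_sub_logb {a b : ℝ} (ha : 0 ≤ a) (hb : 0 < b) :
    -(2 * b) ≤ a * (Real.logb 2 a - Real.logb 2 b) := by
  rcases ha.eq_or_lt with rfl | ha
  · linarith
  have hlog : Real.log (b / a) ≤ b / a - 1 := Real.log_le_sub_one_of_pos (by positivity)
  have hnat : a * Real.log (b / a) ≤ b := by
    calc a * Real.log (b / a) ≤ a * (b / a - 1) := by gcongr
      _ = b - a := by field_simp
      _ ≤ b := sub_le_self b ha.le
  have hbase : a * (Real.logb 2 a - Real.logb 2 b) = -(a * Real.log (b / a)) / Real.log 2 := by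
    rw [← Real.logb_div ha.ne' hb.ne', Real.logb, ← inv_div b a, Real.log_inv]
    ring
  rw [hbase, le_div_iff₀ (Real.log_pos one_lt_two)]
  nlinarith [Real.log_two_gt_d9]

lemma mul_le_mul_min_add_mul_logb_sub_logb {a b L : ℝ} (ha : 0 ≤ a) (hb : 0 < b) (hL : 0 ≤ L) :
    L * a ≤ L * min a (2 ^ L * b) + a * (Real.logb 2 a - Real.logb 2 b) + 2 * b := by
  have h2L : (0 : ℝ) < 2 ^ L := Real.rpow_pos_of_pos two_pos L
  rcases le_or_gt a (2 ^ L * b) with hab | hab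
  · rw [min_eq_left hab]
    linarith [neg_two_mul_le_mul_logb_sub_logb ha hb]
  · rw [min_eq_right hab.le]
    have hlog : L ≤ Real.logb 2 a - Real.logb 2 b := by
      rw [le_sub_iff_add_le, ← Real.logb_rpow two_pos (OfNat.ofNat_ne_one 2) (x := L),
        ← Real.logb_mul h2L.ne' hb.ne']
      exact Real.logb_le_logb_of_le one_lt_two (by positivity) hab.le
    have hmin : 0 ≤ L * (2 ^ L * b) := by positivity
    linarith [mul_le_mul_of_nonneg_left hlog ha]

variable {ρ σ T : Matrix n n ℂ}

lemma IsEffect.mul_le_rtr_mul_mlog_sub_mlog (hT : IsEffect T) (hρ : ρ.PosSemidef)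
    (hσ : σ.PosSemidef) (hsupp : SuppLE ρ σ) {L : ℝ} (hL : 0 ≤ L) :
    L * (rtr ρ - 2 * (rtr ((1 - T) * ρ) + 2 ^ L * rtr (T * σ)))
      ≤ rtr (ρ * (mlog ρ - mlog σ)) + 2 * rtr σ := by
  obtain ⟨U, l, hl, rfl, hlogl⟩ := exists_spectralMatrix hρ
  obtain ⟨V, μ, hμ, rfl, hlogμ⟩ := exists_spectralMatrix hσ
  rw [suppLE_spectralMatrix_iff] at hsupp
  have hterm (i j : n) : L * (l i * overlap U V i j)
      ≤ L * (min (l i) (2 ^ L * μ j) * overlap U V i j)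
        + l i * (Real.logb 2 (l i) - Real.logb 2 (μ j)) * overlap U V i j
        + 2 * (μ j * overlap U V i j) := by
    rcases (hμ j).eq_or_lt with hj | hj
    · rcases mul_eq_zero.mp (hsupp i j hj.symm) with h | h <;> simp [h, ← hj]
    · linarith [mul_le_mul_of_nonneg_right (mul_le_mul_min_add_mul_logb_sub_logb (hl i) hj hL)
        (overlap_nonneg U V i j)]
  have hsum : L * ∑ i, l i ≤ L * (∑ i, ∑ j, min (l i) (2 ^ L * μ j) * overlap U V i j)
      + ∑ i, ∑ j, l i * (Real.logb 2 (l i) - Real.logb 2 (μ j)) * overlap U V i j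
      + 2 * ∑ j, μ j := by
    calc L * ∑ i, l i = ∑ i, ∑ j, L * (l i * overlap U V i j) := by
          simp only [← Finset.mul_sum, sum_overlap_right, mul_one]
      _ ≤ _ := Finset.sum_le_sum fun i _ => Finset.sum_le_sum fun j _ => hterm i j
      _ = _ := by
          have hcol : ∑ i, ∑ j, μ j * overlap U V i j = ∑ j, μ j := by
            rw [Finset.sum_comm]
            simp only [← Finset.mul_sum, sum_overlap_left, mul_one]
          simp only [Finset.sum_add_distrib, ← Finset.mul_sum, hcol]
  have hmin := mul_le_mul_of_nonneg_left
    (hT.sum_min_mul_overlap_le U V hl hμ (Real.rpow_pos_of_pos two_pos L).le) hL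
  rw [hlogl, hlogμ, rtr_spectralMatrix_mul_sub, rtr_spectralMatrix, rtr_spectralMatrix]
  linarith

/-- The constants come from choosing the cutoff `L = (r + 3) / (1 - 3 * ε)` in the one-shot
converse. -/
lemma dH_le_of_relEntropy_le (hρ : IsState ρ) (hσ : IsState σ) {r ε : ℝ}
    (hr : relEntropy ρ σ ≤ r) (hε : 0 < ε) (hε3 : ε < 1 / 3) :
    dH ε ρ σ ≤ ((r + 3) / (1 - 3 * ε) + Real.logb 2 (2 / ε) : ℝ) := by
  have hsupp : SuppLE ρ σ := by
    by_contra h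
    rw [relEntropy, if_neg h] at hr
    exact EReal.coe_ne_top r (top_le_iff.mp hr)
  rw [relEntropy, if_pos hsupp, EReal.coe_le_coe_iff] at hr
  have honeshot {T : Matrix n n ℂ} (hT : IsEffect T) {L : ℝ} (hL : 0 ≤ L) :
      L * (1 - 2 * (rtr ((1 - T) * ρ) + 2 ^ L * rtr (T * σ))) ≤ r + 2 := by
    have h := hT.mul_le_rtr_mul_mlog_sub_mlog hρ.1 hσ.1 hsupp hL
    rw [hρ.rtr_eq_one, hσ.rtr_eq_one] at h
    linarith
  have hr2 : 0 ≤ r + 2 := by simpa using honeshot IsEffect.one le_rfl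
  have hε' : 0 < 1 - 3 * ε := by linarith
  set L := (r + 3) / (1 - 3 * ε)
  have hLpos : 0 < L := div_pos (by linarith) hε'
  have hL_mul : L * (1 - 3 * ε) = r + 3 := div_mul_cancel₀ _ hε'.ne'
  refine dH_le_of_forall_isEffect hρ hε.le fun T hT hTρ => ?_
  by_contra! hTσ
  have hσ_small : 2 ^ L * rtr (T * σ) < ε / 2 := by
    have h2 : (2 : ℝ) ^ L * 2 ^ (-(L + Real.logb 2 (2 / ε))) = ε / 2 := by
      rw [← Real.rpow_add two_pos, neg_add, add_neg_cancel_left, Real.rpow_neg two_pos.le,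
        Real.rpow_logb two_pos (OfNat.ofNat_ne_one 2) (by positivity), inv_div]
    rw [← h2]
    exact mul_lt_mul_of_pos_left hTσ (Real.rpow_pos_of_pos two_pos L)
  have hreject : rtr ((1 - T) * ρ) ≤ ε := by
    rw [Matrix.sub_mul, Matrix.one_mul, rtr_sub, hρ.rtr_eq_one]
    linarith
  have hcut : L * (1 - 3 * ε) ≤ r + 2 :=
    (mul_le_mul_of_nonneg_left (by linarith) hLpos.le).trans (honeshot hT hLpos.le)
  linarith

end RelativeEntropy

section ProductDistributions

variable {ι : Type}

/-- The product `f x₁ * ⋯ * f x_k` along a multi-index; for a probability vector `f` it is the law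
of `k` independent samples. -/
def tpowProd {M : Type*} [Monoid M] (f : ι → M) : ∀ k, tpow ι k → M
  | 0, _ => 1
  | k + 1, x => tpowProd f k x.1 * f x.2

lemma map_tpowProd {M N F : Type*} [Monoid M] [Monoid N] [FunLike F M N] [MonoidHomClass F M N]
    (φ : F) (f : ι → M) (k : ℕ) (x : tpow ι k) :
    φ (tpowProd f k x) = tpowProd (fun i => φ (f i)) k x := by
  induction k with
  | zero => exact map_one φ
  | succ k ih => rw [tpowProd, tpowProd, map_mul, ih]

lemma tpowProd_mul {M : Type*} [CommMonoid M] (f g : ι → M) (k : ℕ) (x : tpow ι k) :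
    tpowProd (fun i => f i * g i) k x = tpowProd f k x * tpowProd g k x := by
  induction k with
  | zero => exact (mul_one 1).symm
  | succ k ih => rw [tpowProd, tpowProd, tpowProd, ih, mul_mul_mul_comm]

lemma tpowProd_const {M : Type*} [Monoid M] (a : M) (k : ℕ) (x : tpow ι k) :
    tpowProd (fun _ => a) k x = a ^ k := by
  induction k with
  | zero => exact (pow_zero a).symm
  | succ k ih => rw [tpowProd, ih, pow_succ]

lemma tpowProd_inv {M : Type*} [DivisionCommMonoid M] (f : ι → M) (k : ℕ) (x : tpow ι k) :
    tpowProd (fun i => (f i)⁻¹) k x = (tpowProd f k x)⁻¹ :=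
  (map_tpowProd (MulEquiv.inv M) f k x).symm

lemma tpowProd_nonneg {f : ι → ℝ} (hf : ∀ i, 0 ≤ f i) (k : ℕ) (x : tpow ι k) :
    0 ≤ tpowProd f k x := by
  induction k with
  | zero => exact zero_le_one
  | succ k ih => exact mul_nonneg (ih x.1) (hf x.2)

lemma tpowProd_rpow {f : ι → ℝ} (hf : ∀ i, 0 ≤ f i) (t : ℝ) (k : ℕ) (x : tpow ι k) :
    tpowProd (fun i => f i ^ t) k x = tpowProd f k x ^ t := by
  induction k with
  | zero => exact (Real.one_rpow t).symm
  | succ k ih =>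
    rw [tpowProd, tpowProd, ih, Real.mul_rpow (tpowProd_nonneg hf k x.1) (hf x.2)]

variable [Fintype ι]

lemma sum_tpow_succ {M : Type*} [AddCommMonoid M] {k : ℕ} (f : tpow ι k × ι → M) :
    ∑ x : tpow ι (k + 1), f x = ∑ y, ∑ i, f (y, i) :=
  Fintype.sum_prod_type f

lemma sum_tpowProd {R : Type*} [CommSemiring R] (f : ι → R) (k : ℕ) :
    ∑ x, tpowProd f k x = (∑ i, f i) ^ k := by
  induction k with
  | zero => exact (Fintype.sum_unique (ι := PUnit) _).trans (pow_zero _).symm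
  | succ k ih => rw [pow_succ, ← ih, Finset.sum_mul_sum]; exact sum_tpow_succ _

lemma exists_pos_lt_of_hasDerivAt_neg {g : ℝ → ℝ} {g' : ℝ} (hg : HasDerivAt g g' 0)
    (hg' : g' < 0) : ∃ t > (0 : ℝ), g t < g 0 := by
  have hslope := hg.hasDerivWithinAt.limsup_slope_le' (s := Set.Ioi 0) Set.self_notMem_Ioi hg'
  obtain ⟨t, ht, htpos⟩ := (hslope.and self_mem_nhdsWithin).exists
  refine ⟨t, htpos, ?_⟩
  rw [slope_def_field, sub_zero, div_lt_iff₀ htpos, zero_mul] at ht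
  exact sub_neg.mp ht

variable {l c : ι → ℝ}

lemma exists_sum_mul_rpow_lt_of_sum_mul_logb_neg (hc : ∀ i, 0 ≤ c i)
    (hlc : ∀ i, l i ≠ 0 → c i ≠ 0) (h : ∑ i, l i * Real.logb 2 (c i) < 0) :
    ∃ t > (0 : ℝ), ∑ i, l i * c i ^ t < ∑ i, l i := by
  have hderiv : HasDerivAt (fun t : ℝ => ∑ i, l i * c i ^ t) (∑ i, l i * Real.log (c i)) 0 := by
    refine HasDerivAt.fun_sum fun i _ => ?_
    by_cases hi : l i = 0
    · simpa [hi] using hasDerivAt_const (0 : ℝ) (0 : ℝ)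
    · simpa using ((Real.hasStrictDerivAt_const_rpow
        ((hc i).lt_of_ne' (hlc i hi)) 0).hasDerivAt.const_mul (l i))
  have hneg : ∑ i, l i * Real.log (c i) < 0 := by
    have hlog (i : ι) : l i * Real.log (c i) = l i * Real.logb 2 (c i) * Real.log 2 := by
      rw [mul_assoc, Real.logb, div_mul_cancel₀ _ (Real.log_pos one_lt_two).ne']
    simp only [hlog, ← Finset.sum_mul]
    exact mul_neg_of_neg_of_pos h (Real.log_pos one_lt_two)
  simpa using exists_pos_lt_of_hasDerivAt_neg hderiv hneg

lemma exists_sum_mul_rpow_lt_of_eq_zero (hl : ∀ i, 0 ≤ l i) {i₀ : ι} (hi₀ : l i₀ ≠ 0)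
    (hc₀ : c i₀ = 0) : ∃ t > (0 : ℝ), ∑ i, l i * c i ^ t < ∑ i, l i := by
  have hlim : Tendsto (fun t : ℝ => ∑ i, l i * c i ^ t) (𝓝[>] 0)
      (𝓝 (∑ i, l i * if c i = 0 then 0 else 1)) := by
    refine tendsto_finsetSum _ fun i _ => Tendsto.const_mul _ ?_
    split_ifs with hi
    · refine tendsto_const_nhds.congr' ?_
      filter_upwards [self_mem_nhdsWithin] with t ht
      rw [hi, Real.zero_rpow (ne_of_gt ht)]
    · have hcont := (Real.continuousAt_const_rpow (b := 0) hi).tendsto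
      rw [Real.rpow_zero] at hcont
      exact hcont.mono_left nhdsWithin_le_nhds
  have hlt : ∑ i, (l i * if c i = 0 then 0 else 1) < ∑ i, l i := by
    refine Finset.sum_lt_sum (fun i _ => ?_) ⟨i₀, Finset.mem_univ _, ?_⟩
    · split_ifs <;> simp [hl i]
    · simpa [hc₀] using (hl i₀).lt_of_ne' hi₀
  obtain ⟨t, ht, htpos⟩ := ((hlim.eventually_lt_const hlt).and self_mem_nhdsWithin).exists
  exact ⟨t, htpos, ht⟩

lemma eventually_sum_tpowProd_le (hl : ∀ i, 0 ≤ l i) (hl1 : ∑ i, l i = 1) (hc : ∀ i, 0 ≤ c i)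
    (h : (∀ i, l i ≠ 0 → c i ≠ 0) → ∑ i, l i * Real.logb 2 (c i) < 0) {ε : ℝ} (hε : 0 < ε) :
    ∀ᶠ k in atTop, ∀ S : Finset (tpow ι k),
      (∀ x ∈ S, tpowProd l k x ≠ 0 → 1 < tpowProd c k x) → ∑ x ∈ S, tpowProd l k x ≤ ε := by
  obtain ⟨t, htpos, ht⟩ : ∃ t > (0 : ℝ), ∑ i, l i * c i ^ t < 1 := by
    rw [← hl1]
    by_cases hlc : ∀ i, l i ≠ 0 → c i ≠ 0
    · exact exists_sum_mul_rpow_lt_of_sum_mul_logb_neg hc hlc (h hlc)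
    · push Not at hlc
      obtain ⟨i₀, hi₀, hc₀⟩ := hlc
      exact exists_sum_mul_rpow_lt_of_eq_zero hl hi₀ hc₀
  have hterm (i : ι) : 0 ≤ l i * c i ^ t := mul_nonneg (hl i) (Real.rpow_nonneg (hc i) t)
  have hpow := tendsto_pow_atTop_nhds_zero_of_lt_one (Finset.sum_nonneg fun i _ => hterm i) ht
  filter_upwards [hpow.eventually_le_const hε] with k hk S hS
  calc ∑ x ∈ S, tpowProd l k x ≤ ∑ x ∈ S, tpowProd (fun i => l i * c i ^ t) k x := by
        refine Finset.sum_le_sum fun x hx => ?_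
        rw [tpowProd_mul, tpowProd_rpow hc]
        by_cases hx0 : tpowProd l k x = 0
        · rw [hx0, zero_mul]
        · exact le_mul_of_one_le_right (tpowProd_nonneg hl k x)
            (Real.one_le_rpow (hS x hx hx0).le htpos.le)
    _ ≤ ∑ x, tpowProd (fun i => l i * c i ^ t) k x :=
        Finset.sum_le_univ_sum_of_nonneg fun x => tpowProd_nonneg hterm k x
    _ = (∑ i, l i * c i ^ t) ^ k := sum_tpowProd _ k
    _ ≤ ε := hk

lemma eventually_sum_tpowProd_filter_lt_le (hl : ∀ i, 0 ≤ l i) (hl1 : ∑ i, l i = 1)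
    {s : ℝ} (hs : s < ∑ i, l i * Real.logb 2 (l i)) {ε : ℝ} (hε : 0 < ε) :
    ∀ᶠ k : ℕ in atTop,
      ∑ x with tpowProd l k x < (2 ^ s) ^ k, tpowProd l k x ≤ ε := by
  have h2s : (0 : ℝ) < 2 ^ s := Real.rpow_pos_of_pos two_pos s
  refine (eventually_sum_tpowProd_le (c := fun i => 2 ^ s * (l i)⁻¹) hl hl1
    (fun i => mul_nonneg h2s.le (inv_nonneg.mpr (hl i))) (fun _ => ?_) hε).mono
    fun k hk => hk _ fun x hx hx0 => ?_
  · have hterm (i : ι) :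
        l i * Real.logb 2 (2 ^ s * (l i)⁻¹) = l i * s - l i * Real.logb 2 (l i) := by
      by_cases hi : l i = 0
      · simp [hi]
      · rw [Real.logb_mul h2s.ne' (inv_ne_zero hi), Real.logb_inv,
          Real.logb_rpow two_pos (OfNat.ofNat_ne_one 2)]
        ring
    simp only [hterm, Finset.sum_sub_distrib, ← Finset.sum_mul, hl1]
    linarith
  · rw [tpowProd_mul, tpowProd_const, tpowProd_inv, ← div_eq_mul_inv,
      one_lt_div ((tpowProd_nonneg hl k x).lt_of_ne' hx0)]
    exact (Finset.mem_filter.mp hx).2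

lemma eventually_sum_tpowProd_filter_gt_le {η μ : ι → ℝ} (hη : ∀ j, 0 ≤ η j)
    (hη1 : ∑ j, η j = 1) (hμ : ∀ j, 0 ≤ μ j) {t : ℝ}
    (ht : (∀ j, η j ≠ 0 → μ j ≠ 0) → t < -∑ j, η j * Real.logb 2 (μ j)) {ε : ℝ} (hε : 0 < ε) :
    ∀ᶠ k : ℕ in atTop,
      ∑ y with (2 ^ (-t)) ^ k < tpowProd μ k y, tpowProd η k y ≤ ε := by
  have h2t : (0 : ℝ) < 2 ^ t := Real.rpow_pos_of_pos two_pos t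
  refine (eventually_sum_tpowProd_le (c := fun j => 2 ^ t * μ j) hη hη1
    (fun j => mul_nonneg h2t.le (hμ j)) (fun hsupp => ?_) hε).mono fun k hk => hk _ fun y hy _ => ?_
  · have hημ (j : ι) (hj : η j ≠ 0) : μ j ≠ 0 := right_ne_zero_of_mul (hsupp j hj)
    have hterm (j : ι) : η j * Real.logb 2 (2 ^ t * μ j) = η j * t + η j * Real.logb 2 (μ j) := by
      by_cases hj : η j = 0
      · simp [hj]
      · rw [Real.logb_mul h2t.ne' (hημ j hj), Real.logb_rpow two_pos (OfNat.ofNat_ne_one 2),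
          mul_add]
    simp only [hterm, Finset.sum_add_distrib, ← Finset.sum_mul, hη1]
    linarith [ht hημ]
  · have hy' := (Finset.mem_filter.mp hy).2
    rw [Real.rpow_neg two_pos.le, inv_pow, inv_lt_iff_one_lt_mul₀' (pow_pos h2t k)] at hy'
    rwa [tpowProd_mul, tpowProd_const]

lemma sum_sub_le_sum_sum {α β : Type*} [Fintype α] [DecidableEq α] [Fintype β] [DecidableEq β]
    {r : α → β → ℝ} (hr : ∀ a b, 0 ≤ r a b) (I : Finset α) (J : Finset β) :
    ∑ a, ∑ b, r a b - ∑ a ∈ Iᶜ, ∑ b, r a b - ∑ b ∈ Jᶜ, ∑ a, r a b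
      ≤ ∑ a ∈ I, ∑ b ∈ J, r a b := by
  have hrow : ∑ a ∈ I, ∑ b ∈ Jᶜ, r a b ≤ ∑ b ∈ Jᶜ, ∑ a, r a b := by
    rw [Finset.sum_comm]
    exact Finset.sum_le_sum fun b _ => Finset.sum_le_univ_sum_of_nonneg fun a => hr a b
  have hsplit : ∑ a ∈ I, ∑ b, r a b = ∑ a ∈ I, ∑ b ∈ J, r a b + ∑ a ∈ I, ∑ b ∈ Jᶜ, r a b := by
    simp only [← Finset.sum_add_distrib, Finset.sum_add_sum_compl]
  linarith [Finset.sum_add_sum_compl I fun a => ∑ b, r a b]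

end ProductDistributions

section TensorPowers

variable {n : Type} [DecidableEq n]

lemma tpowMat_apply_self (A : Matrix n n ℂ) (k : ℕ) (x : tpow n k) :
    tpowMat A k x x = tpowProd (fun i => A i i) k x := by
  induction k with
  | zero => exact one_apply_eq x
  | succ k ih => exact congrArg (· * A x.2 x.2) (ih x.1)

lemma tpowMat_diagonal (d : n → ℂ) (k : ℕ) : tpowMat (diagonal d) k = diagonal (tpowProd d k) := by
  induction k with
  | zero => exact diagonal_one.symm
  | succ k ih => rw [tpowMat, ih]; exact diagonal_kronecker_diagonal _ _

lemma tpowMat_one (k : ℕ) : tpowMat (1 : Matrix n n ℂ) k = 1 := by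
  induction k with
  | zero => rfl
  | succ k ih => rw [tpowMat, ih]; exact one_kronecker_one

lemma conjTranspose_tpowMat (A : Matrix n n ℂ) (k : ℕ) : (tpowMat A k)ᴴ = tpowMat Aᴴ k := by
  induction k with
  | zero => exact conjTranspose_one
  | succ k ih => rw [tpowMat, tpowMat, ← ih]; exact conjTranspose_kronecker _ _

variable [Fintype n]

lemma tpowMat_mul (A B : Matrix n n ℂ) (k : ℕ) :
    tpowMat A k * tpowMat B k = tpowMat (A * B) k := by
  induction k with
  | zero => exact Matrix.mul_one _
  | succ k ih => rw [tpowMat, tpowMat, tpowMat, ← ih]; exact (mul_kronecker_mul _ _ _ _).symm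

/-- The `k`-fold tensor power of a unitary matrix. -/
def tpowUnitary (U : unitaryGroup n ℂ) (k : ℕ) : unitaryGroup (tpow n k) ℂ :=
  ⟨tpowMat U k, by
    rw [mem_unitaryGroup_iff', star_eq_conjTranspose, conjTranspose_tpowMat, tpowMat_mul,
      conjTranspose_mul_self_unitary, tpowMat_one]⟩

lemma tpowMat_spectralMatrix (U : unitaryGroup n ℂ) (l : n → ℝ) (k : ℕ) :
    tpowMat (spectralMatrix U l) k = spectralMatrix (tpowUnitary U k) (tpowProd l k) := by
  simp only [spectralMatrix, tpowUnitary, ← tpowMat_mul, tpowMat_diagonal, conjTranspose_tpowMat,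
    ← Complex.ofRealHom_eq_coe, map_tpowProd]

variable (U V : unitaryGroup n ℂ) {l μ : n → ℝ}

lemma sum_tpowProd_mul_overlap (l : n → ℝ) (k : ℕ) (y : tpow n k) :
    ∑ x, tpowProd l k x * overlap (tpowUnitary U k) (tpowUnitary V k) x y
      = tpowProd (fun j => ∑ i, l i * overlap U V i j) k y := by
  rw [← Complex.ofReal_inj, sum_mul_overlap_left, ← tpowMat_spectralMatrix,
    ← Complex.ofRealHom_eq_coe, map_tpowProd]
  simp only [Complex.ofRealHom_eq_coe, sum_mul_overlap_left, ← tpowMat_apply_self, ← tpowMat_mul,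
    ← conjTranspose_tpowMat, tpowUnitary]

lemma exists_isEffect_tpowMat (hl : ∀ i, 0 ≤ l i) (hl1 : ∑ i, l i = 1) {s t δ : ℝ} {k : ℕ}
    (hI : ∑ x with tpowProd l k x < (2 ^ s) ^ k, tpowProd l k x ≤ δ)
    (hJ : ∑ y with (2 ^ (-t)) ^ k < tpowProd μ k y,
      tpowProd (fun j => ∑ i, l i * overlap U V i j) k y ≤ δ) :
    ∃ T, IsEffect T ∧ 1 - 4 * δ ≤ rtr (T * tpowMat (spectralMatrix U l) k) ∧
      rtr (T * tpowMat (spectralMatrix V μ) k) ≤ (2 ^ (-(s + t))) ^ k := by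
  set I : Finset (tpow n k) := {x | (2 ^ s) ^ k ≤ tpowProd l k x}
  set J : Finset (tpow n k) := {y | tpowProd μ k y ≤ (2 ^ (-t)) ^ k}
  set w := overlap (tpowUnitary U k) (tpowUnitary V k)
  have hlk (x : tpow n k) : 0 ≤ tpowProd l k x := tpowProd_nonneg hl k x
  have hlk1 : ∑ x, tpowProd l k x = 1 := by rw [sum_tpowProd, hl1, one_pow]
  have hmass : 1 - 2 * δ ≤ ∑ x ∈ I, ∑ y ∈ J, tpowProd l k x * w x y := by
    have hunion := sum_sub_le_sum_sum
      (fun x y => mul_nonneg (hlk x) (overlap_nonneg (tpowUnitary U k) (tpowUnitary V k) x y)) I J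
    simp only [sum_tpowProd_mul_overlap, ← Finset.mul_sum, sum_overlap_right, mul_one, hlk1, I, J,
      Finset.compl_filter, not_le] at hunion
    simp only [w, ← Finset.mul_sum, I, J]
    linarith
  have hratio : ∀ x ∈ I, ∀ y ∈ J, tpowProd μ k y ≤ (2 ^ (-(s + t))) ^ k * tpowProd l k x := by
    intro x hx y hy
    calc tpowProd μ k y ≤ (2 ^ (-t)) ^ k := (Finset.mem_filter.mp hy).2
      _ = (2 ^ (-(s + t))) ^ k * (2 ^ s) ^ k := by
          rw [← mul_pow, ← Real.rpow_add two_pos, neg_add_rev, neg_add_cancel_right]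
      _ ≤ (2 ^ (-(s + t))) ^ k * tpowProd l k x := by
          gcongr
          exact (Finset.mem_filter.mp hx).2
  obtain ⟨T, hT, hTρ, hTσ⟩ := exists_isEffect_of_le_mul (tpowUnitary U k) (tpowUnitary V k) hlk
    (by positivity) hratio
  rw [← tpowMat_spectralMatrix, hlk1] at hTρ hTσ
  exact ⟨T, hT, by linarith, by linarith⟩

lemma eventually_exists_isEffect_tpowMat (hl : ∀ i, 0 ≤ l i) (hl1 : ∑ i, l i = 1)
    (hμ : ∀ j, 0 ≤ μ j) {s t ε : ℝ} (hε : 0 < ε) (hs : s < ∑ i, l i * Real.logb 2 (l i))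
    (ht : (∀ i j, μ j = 0 → l i * overlap U V i j = 0) →
      t < -∑ i, ∑ j, l i * Real.logb 2 (μ j) * overlap U V i j) :
    ∀ᶠ k : ℕ in atTop, ∃ T, IsEffect T ∧ 1 - ε ≤ rtr (T * tpowMat (spectralMatrix U l) k) ∧
      rtr (T * tpowMat (spectralMatrix V μ) k) ≤ 2 ^ (-(k * (s + t))) := by
  set η : n → ℝ := fun j => ∑ i, l i * overlap U V i j with hη
  have hterm (i j : n) : 0 ≤ l i * overlap U V i j := mul_nonneg (hl i) (overlap_nonneg U V i j)
  have hη0 (j : n) : 0 ≤ η j := Finset.sum_nonneg fun i _ => hterm i j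
  have hη1 : ∑ j, η j = 1 := by
    rw [hη, Finset.sum_comm]
    simp only [← Finset.mul_sum, sum_overlap_right, mul_one, hl1]
  have htη (hsupp : ∀ j, η j ≠ 0 → μ j ≠ 0) : t < -∑ j, η j * Real.logb 2 (μ j) := by
    refine (ht fun i j hj => ?_).trans_eq ?_
    · have hηj : η j = 0 := not_imp_not.mp (hsupp j) hj
      exact (Finset.sum_eq_zero_iff_of_nonneg fun i _ => hterm i j).mp hηj i (Finset.mem_univ i)
    · rw [Finset.sum_comm]
      simp only [hη, Finset.sum_mul, mul_right_comm]
  filter_upwards [eventually_sum_tpowProd_filter_lt_le hl hl1 hs (show 0 < ε / 4 by positivity),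
    eventually_sum_tpowProd_filter_gt_le hη0 hη1 hμ htη (show 0 < ε / 4 by positivity)]
    with k hI hJ
  obtain ⟨T, hT, hTρ, hTσ⟩ := exists_isEffect_tpowMat U V hl hl1 hI hJ
  have hexp : (2 : ℝ) ^ (-(k * (s + t))) = (2 ^ (-(s + t))) ^ k := by
    rw [← Real.rpow_mul_natCast two_pos.le]
    ring_nf
  exact ⟨T, hT, by linarith, hexp ▸ hTσ⟩

lemma eventually_mul_le_dH_tpowMat {ρ σ : Matrix n n ℂ} (hρ : IsState ρ) (hσ : σ.PosSemidef)
    {R : ℝ} (hR : R < relEntropy ρ σ) {ε : ℝ} (hε : 0 < ε) :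
    ∀ᶠ k : ℕ in atTop, ((k * R : ℝ) : EReal) ≤ dH ε (tpowMat ρ k) (tpowMat σ k) := by
  obtain ⟨U, l, hl, rfl, hlogl⟩ := exists_spectralMatrix hρ.1
  obtain ⟨V, μ, hμ, rfl, hlogμ⟩ := exists_spectralMatrix hσ
  have hl1 : ∑ i, l i = 1 := by rw [← rtr_spectralMatrix U, hρ.rtr_eq_one]
  set A := ∑ i, l i * Real.logb 2 (l i) with hA
  set B := ∑ i, ∑ j, l i * Real.logb 2 (μ j) * overlap U V i j with hB
  obtain ⟨s, hs, ht⟩ : ∃ s < A, SuppLE (spectralMatrix U l) (spectralMatrix V μ) → R - s < -B := by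
    by_cases hsupp : SuppLE (spectralMatrix U l) (spectralMatrix V μ)
    · rw [relEntropy, if_pos hsupp, EReal.coe_lt_coe_iff, hlogl, hlogμ, Matrix.mul_sub, rtr_sub,
        spectralMatrix_mul, rtr_spectralMatrix, rtr_spectralMatrix_mul_spectralMatrix] at hR
      obtain ⟨s, hRs, hsA⟩ := exists_between (show R + B < A from by
        simp only [Pi.mul_apply] at hR
        linarith)
      exact ⟨s, hsA, fun _ => by linarith⟩
    · exact ⟨A - 1, by linarith, fun h => absurd h hsupp⟩
  rw [suppLE_spectralMatrix_iff] at ht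
  filter_upwards [eventually_exists_isEffect_tpowMat U V hl hl1 hμ hε hs ht]
    with k ⟨T, hT, hTρ, hTσ⟩
  rw [add_sub_cancel] at hTσ
  refine hT.le_dH ?_ hTρ hTσ
  rw [tpowMat_spectralMatrix]
  exact posSemidef_spectralMatrix _ (tpowProd_nonneg hμ k)

end TensorPowers

section Channels

variable {n m K : Type} [Fintype n] [Fintype m] [Fintype K]

/-- Completely positive trace-preserving maps, with complete positivity stated for an arbitrary
finite ancilla rather than for `Fin k`. -/
structure IsCPTP (Φ : Matrix n n ℂ →ₗ[ℂ] Matrix m m ℂ) : Prop where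
  trace_apply (M : Matrix n n ℂ) : (Φ M).trace = M.trace
  posSemidef_blockApply {K : Type} [Fintype K] {M : Matrix (K × n) (K × n) ℂ} :
    M.PosSemidef → (blockApply Φ M).PosSemidef

lemma IsQChannel.isCPTP {Φ : Matrix n n ℂ →ₗ[ℂ] Matrix m m ℂ} (hΦ : IsQChannel Φ) : IsCPTP Φ where
  trace_apply := hΦ.1
  posSemidef_blockApply {K} _ M hM := by
    rcases isEmpty_or_nonempty K with hK | hK
    · rw [Subsingleton.elim (blockApply Φ M) 0]
      exact PosSemidef.zero
    · let e := Fintype.equivFin K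
      have hreindexed := (hΦ.2 (Fintype.card K) Fintype.card_pos _
        (hM.submatrix (Prod.map e.symm id))).submatrix (Prod.map e id)
      convert hreindexed using 1
      ext ⟨k, x⟩ ⟨k', x'⟩
      simp [blockApply]

lemma IsCPTP.trace_blockApply {Φ : Matrix n n ℂ →ₗ[ℂ] Matrix m m ℂ} (hΦ : IsCPTP Φ)
    (M : Matrix (K × n) (K × n) ℂ) : (blockApply Φ M).trace = M.trace := by
  simp only [trace, diag, Fintype.sum_prod_type]
  exact Finset.sum_congr rfl fun k _ => hΦ.trace_apply (of fun a b => M (k, a) (k, b))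

lemma IsState.submatrix {M : Matrix n n ℂ} (hM : IsState M) (e : m ≃ n) :
    IsState (M.submatrix e e) :=
  ⟨hM.1.submatrix e, (trace_submatrix_equiv M e).trans hM.2⟩

lemma IsState.kronecker {ρ : Matrix n n ℂ} {σ : Matrix m m ℂ} (hρ : IsState ρ) (hσ : IsState σ) :
    IsState (ρ ⊗ₖ σ) :=
  ⟨hρ.1.kronecker hσ.1, by rw [trace_kronecker, hρ.2, hσ.2, one_mul]⟩

lemma IsState.nonempty {ρ : Matrix n n ℂ} (hρ : IsState ρ) : Nonempty n := by
  by_contra hn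
  rw [not_nonempty_iff] at hn
  exact zero_ne_one ((trace_eq_zero_of_isEmpty ρ).symm.trans hρ.2)

lemma exists_isState (n : Type) [Fintype n] [Nonempty n] : ∃ ρ : Matrix n n ℂ, IsState ρ := by
  classical
  obtain ⟨i⟩ := ‹Nonempty n›
  exact ⟨diagonal (Pi.single i 1),
    PosSemidef.diagonal (Pi.single_nonneg.mpr zero_le_one), by simp [trace_diagonal]⟩

lemma IsState.blockApply {Φ : Matrix n n ℂ →ₗ[ℂ] Matrix m m ℂ} (hΦ : IsCPTP Φ)
    {ν : Matrix (K × n) (K × n) ℂ} (hν : IsState ν) : IsState (blockApply Φ ν) :=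
  ⟨hΦ.posSemidef_blockApply hν.1, (hΦ.trace_blockApply ν).trans hν.2⟩

lemma IsState.le_chDiv [DecidableEq m]
    (𝔇 : ∀ (p : Type) [Fintype p] [DecidableEq p], Matrix p p ℂ → Matrix p p ℂ → EReal)
    {k : ℕ} (hk : 1 ≤ k) {ν : Matrix (Fin k × n) (Fin k × n) ℂ} (hν : IsState ν)
    (Φ Ψ : Matrix n n ℂ →ₗ[ℂ] Matrix m m ℂ) :
    𝔇 (Fin k × m) (QCD.blockApply Φ ν) (QCD.blockApply Ψ ν) ≤ chDiv 𝔇 Φ Ψ :=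
  le_iSup₂_of_le k hk (le_iSup₂_of_le ν hν le_rfl)

lemma IsCPTP.id : IsCPTP (LinearMap.id : Matrix n n ℂ →ₗ[ℂ] Matrix n n ℂ) :=
  ⟨fun _ => rfl, fun hM => hM⟩

lemma IsCPTP.tensorChannel {n' m' : Type} [Fintype n'] [Fintype m']
    {Φ : Matrix n n ℂ →ₗ[ℂ] Matrix m m ℂ} {Ψ : Matrix n' n' ℂ →ₗ[ℂ] Matrix m' m' ℂ}
    (hΦ : IsCPTP Φ) (hΨ : IsCPTP Ψ) : IsCPTP (tensorChannel Φ Ψ) where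
  trace_apply M := by
    have hswap : QCD.tensorChannel Φ Ψ M =
        (QCD.blockApply Φ ((QCD.blockApply Ψ M).submatrix (Equiv.prodComm m' n)
          (Equiv.prodComm m' n))).submatrix (Equiv.prodComm m m') (Equiv.prodComm m m') := rfl
    rw [hswap, trace_submatrix_equiv, hΦ.trace_blockApply, trace_submatrix_equiv,
      hΨ.trace_blockApply]
  posSemidef_blockApply {K} _ M hM := by
    let toInput (x : (K × m') × n) : (K × n) × m' := ((x.1.1, x.2), x.1.2)
    let toOutput (x : K × m × m') : (K × m') × m := ((x.1, x.2.2), x.2.1)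
    exact (hΦ.posSemidef_blockApply ((hΨ.posSemidef_blockApply
      (hM.submatrix (Equiv.prodAssoc K n n'))).submatrix toInput)).submatrix toOutput

lemma IsCPTP.tpowChannel {Φ : Matrix n n ℂ →ₗ[ℂ] Matrix m m ℂ} (hΦ : IsCPTP Φ) :
    ∀ k, IsCPTP (tpowChannel Φ k)
  | 0 => IsCPTP.id
  | k + 1 => (IsCPTP.tpowChannel hΦ k).tensorChannel hΦ

end Channels

section ChannelTensorPowers

variable {n m : Type}

/-- The splitting of an `(a + b)`-fold tensor power into its first `a` and last `b` factors. -/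
def tpowAddEquiv (ι : Type) (a : ℕ) : ∀ b : ℕ, tpow ι (a + b) ≃ tpow ι a × tpow ι b
  | 0 => (Equiv.prodPUnit (tpow ι a)).symm
  | b + 1 => ((tpowAddEquiv ι a b).prodCongr (Equiv.refl ι)).trans
      (Equiv.prodAssoc (tpow ι a) (tpow ι b) ι)

lemma tpowChannel_add_apply (Φ : Matrix n n ℂ →ₗ[ℂ] Matrix m m ℂ) (a : ℕ) : ∀ (b : ℕ)
    (M : Matrix (tpow n (a + b)) (tpow n (a + b)) ℂ) (x x' : tpow m (a + b)),
    tpowChannel Φ (a + b) M x x' =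
      tensorChannel (tpowChannel Φ a) (tpowChannel Φ b)
        (M.submatrix (tpowAddEquiv n a b).symm (tpowAddEquiv n a b).symm)
        (tpowAddEquiv m a b x) (tpowAddEquiv m a b x')
  | 0, _, _, _ => rfl
  | b + 1, M, (x, c), (x', c') => tpowChannel_add_apply Φ a b
      (of fun y y' => Φ (of fun d d' => M (y, d) (y', d')) c c') x x'

lemma tensorChannel_kronecker {n' m' : Type} (Φ : Matrix n n ℂ →ₗ[ℂ] Matrix m m ℂ)
    (Ψ : Matrix n' n' ℂ →ₗ[ℂ] Matrix m' m' ℂ) (M : Matrix n n ℂ) (N : Matrix n' n' ℂ) :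
    tensorChannel Φ Ψ (M ⊗ₖ N) = Φ M ⊗ₖ Ψ N := by
  ext ⟨x, y⟩ ⟨x', y'⟩
  have hblock (a a' : n) : Ψ (of fun b b' => M a a' * N b b') = M a a' • Ψ N :=
    map_smul Ψ (M a a') N
  calc tensorChannel Φ Ψ (M ⊗ₖ N) (x, y) (x', y')
      = Φ (of fun a a' => Ψ (of fun b b' => M a a' * N b b') y y') x x' := rfl
    _ = Φ (Ψ N y y' • M) x x' := by
        simp only [hblock, Matrix.smul_apply, smul_eq_mul]
        simp only [mul_comm (M _ _)]
        rfl
    _ = (Φ M ⊗ₖ Ψ N) (x, y) (x', y') := by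
        rw [map_smul, Matrix.smul_apply, smul_eq_mul, mul_comm, kroneckerMap_apply]

/-- The rearrangement bringing two ancillas next to the inputs (or outputs) of their own blocks of
`a` and `b` channel uses. -/
def tpowShuffle (ι K K' : Type) (a b : ℕ) :
    (K × K') × tpow ι (a + b) ≃ (K × tpow ι a) × (K' × tpow ι b) :=
  ((Equiv.refl (K × K')).prodCongr (tpowAddEquiv ι a b)).trans (Equiv.prodProdProdComm K K' _ _)

lemma blockApply_tpowChannel_kronecker {K K' : Type} (Φ : Matrix n n ℂ →ₗ[ℂ] Matrix m m ℂ)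
    {a b : ℕ} (ν : Matrix (K × tpow n a) (K × tpow n a) ℂ)
    (ν' : Matrix (K' × tpow n b) (K' × tpow n b) ℂ) :
    blockApply (tpowChannel Φ (a + b))
        ((ν ⊗ₖ ν').submatrix (tpowShuffle n K K' a b) (tpowShuffle n K K' a b)) =
      (blockApply (tpowChannel Φ a) ν ⊗ₖ blockApply (tpowChannel Φ b) ν').submatrix
        (tpowShuffle m K K' a b) (tpowShuffle m K K' a b) := by
  ext ⟨⟨k, k'⟩, x⟩ ⟨⟨j, j'⟩, y⟩
  have hfactor := congrFun₂ (tensorChannel_kronecker (tpowChannel Φ a) (tpowChannel Φ b)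
    (of fun c d => ν (k, c) (j, d)) (of fun c d => ν' (k', c) (j', d)))
    (tpowAddEquiv m a b x) (tpowAddEquiv m a b y)
  refine (tpowChannel_add_apply Φ a b _ x y).trans (Eq.trans ?_ hfactor)
  refine congrArg (fun M => tensorChannel _ _ M _ _) ?_
  ext
  simp [tpowShuffle]

lemma nonempty_tpow [hn : Nonempty n] : ∀ r, Nonempty (tpow n r)
  | 0 => ⟨PUnit.unit⟩
  | r + 1 => (nonempty_tpow r).elim fun x => hn.map fun y => (x, y)

end ChannelTensorPowers

section JointOutputs

variable {n m : Type} [Fintype n] {E F : Matrix n n ℂ →ₗ[ℂ] Matrix m m ℂ}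
  {p : Type} {ρ σ : Matrix p p ℂ}

/-- `ρ` and `σ` are the outputs of `N` parallel uses of `E` and of `F`, respectively, on a common
input state with a finite ancilla, up to a relabelling of the basis. -/
def IsJointOutput (E F : Matrix n n ℂ →ₗ[ℂ] Matrix m m ℂ) (N : ℕ) (ρ σ : Matrix p p ℂ) : Prop :=
  ∃ (K : Type) (_ : Fintype K) (ν : Matrix (K × tpow n N) (K × tpow n N) ℂ)
    (e : p ≃ K × tpow m N), IsState ν ∧
    ρ = (blockApply (tpowChannel E N) ν).submatrix e e ∧
    σ = (blockApply (tpowChannel F N) ν).submatrix e e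

lemma IsState.isJointOutput {K : Type} [Fintype K] {N : ℕ}
    {ν : Matrix (K × tpow n N) (K × tpow n N) ℂ} (hν : IsState ν)
    (E F : Matrix n n ℂ →ₗ[ℂ] Matrix m m ℂ) :
    IsJointOutput E F N (QCD.blockApply (tpowChannel E N) ν)
      (QCD.blockApply (tpowChannel F N) ν) :=
  ⟨K, ‹_›, ν, Equiv.refl _, hν, rfl, rfl⟩

lemma IsJointOutput.isState [Fintype m] [Fintype p] {N : ℕ} (h : IsJointOutput E F N ρ σ)
    (hE : IsCPTP E) (hF : IsCPTP F) : IsState ρ ∧ IsState σ := by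
  obtain ⟨K, _, ν, e, hν, rfl, rfl⟩ := h
  exact ⟨(hν.blockApply (hE.tpowChannel N)).submatrix e,
    (hν.blockApply (hF.tpowChannel N)).submatrix e⟩

lemma IsJointOutput.kronecker {a b : ℕ} {q : Type} {ρ' σ' : Matrix q q ℂ}
    (h : IsJointOutput E F a ρ σ) (h' : IsJointOutput E F b ρ' σ') :
    IsJointOutput E F (a + b) (ρ ⊗ₖ ρ') (σ ⊗ₖ σ') := by
  obtain ⟨K, _, ν, e, hν, rfl, rfl⟩ := h
  obtain ⟨K', _, ν', e', hν', rfl, rfl⟩ := h'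
  refine ⟨K × K', inferInstance, (ν ⊗ₖ ν').submatrix (tpowShuffle n K K' a b) _,
    (e.prodCongr e').trans (tpowShuffle m K K' a b).symm, (hν.kronecker hν').submatrix _, ?_, ?_⟩
  all_goals
    rw [blockApply_tpowChannel_kronecker]
    ext ⟨i, j⟩ ⟨i', j'⟩
    simp

lemma IsJointOutput.zero : IsJointOutput E F 0 (1 : Matrix PUnit PUnit ℂ) 1 := by
  classical
  have hν : IsState (1 : Matrix (PUnit × tpow n 0) (PUnit × tpow n 0) ℂ) :=
    ⟨PosSemidef.one, by rw [trace_one]; exact Nat.cast_one⟩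
  refine ⟨PUnit, inferInstance, 1, (Equiv.prodPUnit PUnit).symm, hν, ?_, ?_⟩
  all_goals
    ext
    rfl

lemma IsJointOutput.tpowMat [DecidableEq p] {l : ℕ} (h : IsJointOutput E F l ρ σ) :
    ∀ q, IsJointOutput E F (q * l) (tpowMat ρ q) (tpowMat σ q)
  | 0 => by rw [Nat.zero_mul]; exact IsJointOutput.zero
  | q + 1 => by rw [Nat.succ_mul]; exact (h.tpowMat q).kronecker h

variable [Fintype m] [DecidableEq m]

lemma IsJointOutput.dH_le_chDiv [Fintype p] [DecidableEq p] {N : ℕ} (h : IsJointOutput E F N ρ σ)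
    (hE : IsCPTP E) (hF : IsCPTP F) {ε : ℝ} (hε : 0 ≤ ε) :
    dH ε ρ σ ≤ chDiv (dHD ε) (tpowChannel E N) (tpowChannel F N) := by
  obtain ⟨K, _, ν, e, hν, rfl, rfl⟩ := h
  have : Nonempty K := hν.nonempty.map Prod.fst
  let g := (Fintype.equivFin K).symm
  have hν' := hν.submatrix (g.prodCongr (Equiv.refl (tpow n N)))
  let e' := e.trans (g.prodCongr (Equiv.refl (tpow m N))).symm
  have houtput (Φ : Matrix n n ℂ →ₗ[ℂ] Matrix m m ℂ) :
      (blockApply (tpowChannel Φ N) ν).submatrix e e =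
        (blockApply (tpowChannel Φ N) (ν.submatrix (g.prodCongr (Equiv.refl (tpow n N)))
          (g.prodCongr (Equiv.refl (tpow n N))))).submatrix e' e' := by
    ext i j
    simp [e', blockApply]
  rw [houtput E, houtput F]
  refine (dH_submatrix_equiv_le (hν'.blockApply (hF.tpowChannel N)).1 e'
    ((hν'.blockApply (hE.tpowChannel N)).submatrix e') hε).trans ?_
  exact hν'.le_chDiv (dHD ε) Fintype.card_pos (tpowChannel E N) (tpowChannel F N)

lemma IsJointOutput.dH_tpowMat_le_chDiv [Nonempty n] [Fintype p] [DecidableEq p] {l : ℕ}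
    (h : IsJointOutput E F l ρ σ) (hE : IsCPTP E) (hF : IsCPTP F) {ε : ℝ} (hε : 0 ≤ ε) (N : ℕ) :
    dH ε (QCD.tpowMat ρ (N / l)) (QCD.tpowMat σ (N / l)) ≤
      chDiv (dHD ε) (tpowChannel E N) (tpowChannel F N) := by
  have := nonempty_tpow (n := n) (N % l)
  obtain ⟨ν, hν⟩ := exists_isState (PUnit × tpow n (N % l))
  have hrest := hν.isJointOutput E F
  have hpow := h.tpowMat (N / l)
  have hN := hpow.kronecker hrest
  rw [Nat.div_add_mod'] at hN
  exact (dH_le_dH_kronecker (hpow.isState hE hF).1 (hpow.isState hE hF).2.1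
    (hrest.isState hE hF).1 (hrest.isState hE hF).2 hε).trans (hN.dH_le_chDiv hE hF hε)

end JointOutputs

section Rates

variable {n m : Type} [Fintype n] [Fintype m] [DecidableEq m]
  {E F : Matrix n n ℂ →ₗ[ℂ] Matrix m m ℂ} {ε : ℝ}

/-- `D_H^ε(E^{⊗k} ‖ F^{⊗k}) / k`, with value `0` at `k = 0`. -/
def dHRate (ε : ℝ) (E F : Matrix n n ℂ →ₗ[ℂ] Matrix m m ℂ) (k : ℕ) : EReal :=
  (((k : ℝ)⁻¹ : ℝ) : EReal) * chDiv (dHD ε) (tpowChannel E k) (tpowChannel F k)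

lemma inv_coe_mul_le_iff {c : ℝ} (hc : 0 < c) {x y : EReal} :
    ((c⁻¹ : ℝ) : EReal) * x ≤ y ↔ x ≤ c * y := by
  rw [EReal.coe_inv, mul_comm]
  exact EReal.div_le_iff_le_mul (EReal.coe_pos.mpr hc) (EReal.coe_ne_top c)

lemma coe_inv_mul_le_coe_inv_mul (k : ℕ) {x y : EReal} (hxy : x ≤ y) :
    (((k : ℝ)⁻¹ : ℝ) : EReal) * x ≤ (((k : ℝ)⁻¹ : ℝ) : EReal) * y :=
  mul_le_mul_of_nonneg_left hxy (EReal.coe_nonneg.mpr (inv_nonneg.mpr k.cast_nonneg))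

lemma tendsto_inv_mul_nat_div {l : ℕ} (hl : 0 < l) :
    Tendsto (fun N : ℕ => (N : ℝ)⁻¹ * (N / l : ℕ)) atTop (𝓝 (l : ℝ)⁻¹) := by
  have hfloor := (tendsto_nat_floor_mul_div_atTop (R := ℝ) (a := (l : ℝ)⁻¹)
    (by positivity)).comp tendsto_natCast_atTop_atTop
  refine hfloor.congr fun N => ?_
  rw [Function.comp_apply, inv_mul_eq_div, Nat.floor_div_natCast, Nat.floor_natCast,
    inv_mul_eq_div]

lemma IsJointOutput.inv_mul_le_liminf [Nonempty n] {p : Type} [Fintype p] [DecidableEq p]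
    {ρ σ : Matrix p p ℂ} {l : ℕ} (h : IsJointOutput E F l ρ σ) (hl : 0 < l) (hE : IsCPTP E)
    (hF : IsCPTP F) (hε : 0 < ε) {R : ℝ} (hR : R < relEntropy ρ σ) :
    (((l : ℝ)⁻¹ * R : ℝ) : EReal) ≤ liminf (dHRate ε E F) atTop := by
  have hlim : Tendsto (fun N : ℕ => (((N : ℝ)⁻¹ * ((N / l : ℕ) * R) : ℝ) : EReal)) atTop
      (𝓝 (((l : ℝ)⁻¹ * R : ℝ) : EReal)) := by
    simpa only [EReal.tendsto_coe, mul_assoc] using (tendsto_inv_mul_nat_div hl).mul_const R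
  have hstein := (Nat.tendsto_div_const_atTop hl.ne').eventually
    (eventually_mul_le_dH_tpowMat (h.isState hE hF).1 (h.isState hE hF).2.1 hR hε)
  rw [← hlim.liminf_eq]
  refine liminf_le_liminf ?_
  filter_upwards [hstein] with N hN
  rw [EReal.coe_mul]
  exact coe_inv_mul_le_coe_inv_mul N (hN.trans (h.dH_tpowMat_le_chDiv hE hF hε.le N))

lemma regRelEntropy_le_liminf_dHRate (hE : IsCPTP E) (hF : IsCPTP F) (hε : 0 < ε) :
    regRelEntropy E F ≤ liminf (dHRate ε E F) atTop := by
  refine iSup₂_le fun l hl => (inv_coe_mul_le_iff (Nat.cast_pos.mpr hl)).mpr ?_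
  refine iSup₂_le fun k _ => iSup₂_le fun ν hν => ?_
  have : Nonempty n := by
    obtain ⟨l, rfl⟩ := Nat.exists_eq_add_of_le' hl
    exact hν.nonempty.map fun x => x.2.2
  refine EReal.ge_of_forall_gt_iff_ge.mp fun R hR => ?_
  rw [← inv_coe_mul_le_iff (Nat.cast_pos.mpr hl), ← EReal.coe_mul]
  exact (hν.isJointOutput E F).inv_mul_le_liminf hl hE hF hε hR

lemma chDiv_relD_tpowChannel_le {k : ℕ} (hk : 0 < k) {r : ℝ} (hr : regRelEntropy E F ≤ r) :
    chDiv relD (tpowChannel E k) (tpowChannel F k) ≤ ((k * r : ℝ) : EReal) := by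
  rw [EReal.coe_mul, ← inv_coe_mul_le_iff (Nat.cast_pos.mpr hk)]
  exact (le_iSup₂_of_le k hk le_rfl).trans hr

lemma chDiv_dHD_le_of_chDiv_relD_le {Φ Ψ : Matrix n n ℂ →ₗ[ℂ] Matrix m m ℂ} (hΦ : IsCPTP Φ)
    (hΨ : IsCPTP Ψ) {r : ℝ} (hr : chDiv relD Φ Ψ ≤ r) (hε : 0 < ε) (hε3 : ε < 1 / 3) :
    chDiv (dHD ε) Φ Ψ ≤ ((r + 3) / (1 - 3 * ε) + Real.logb 2 (2 / ε) : ℝ) :=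
  iSup₂_le fun _ hk => iSup₂_le fun _ hν =>
    dH_le_of_relEntropy_le (hν.blockApply hΦ) (hν.blockApply hΨ)
      ((hν.le_chDiv relD hk Φ Ψ).trans hr) hε hε3

lemma limsup_dHRate_le (hE : IsCPTP E) (hF : IsCPTP F) {r : ℝ} (hr : regRelEntropy E F ≤ r)
    (hε : 0 < ε) (hε3 : ε < 1 / 3) :
    limsup (dHRate ε E F) atTop ≤ ((r / (1 - 3 * ε) : ℝ) : EReal) := by
  set c := Real.logb 2 (2 / ε)
  have hbound : ∀ᶠ k : ℕ in atTop, dHRate ε E F k ≤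
      ((r / (1 - 3 * ε) + (k : ℝ)⁻¹ * (3 / (1 - 3 * ε) + c) : ℝ) : EReal) := by
    filter_upwards [eventually_gt_atTop 0] with k hk
    have hk0 : (k : ℝ) ≠ 0 := Nat.cast_ne_zero.mpr hk.ne'
    refine (coe_inv_mul_le_coe_inv_mul k (chDiv_dHD_le_of_chDiv_relD_le (hE.tpowChannel k)
      (hF.tpowChannel k) (chDiv_relD_tpowChannel_le hk hr) hε hε3)).trans_eq ?_
    rw [← EReal.coe_mul, add_div, mul_div_assoc, add_assoc, mul_add, inv_mul_cancel_left₀ hk0]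
  have hlim : Tendsto (fun k : ℕ =>
      ((r / (1 - 3 * ε) + (k : ℝ)⁻¹ * (3 / (1 - 3 * ε) + c) : ℝ) : EReal)) atTop
      (𝓝 ((r / (1 - 3 * ε) : ℝ) : EReal)) := by
    simpa only [EReal.tendsto_coe, zero_mul, add_zero] using
      ((tendsto_inv_atTop_nhds_zero_nat (𝕜 := ℝ)).mul_const _).const_add (r / (1 - 3 * ε))
  exact (limsup_le_limsup hbound).trans_eq hlim.limsup_eq

lemma iInf_limsup_dHRate_le (hE : IsCPTP E) (hF : IsCPTP F) :
    ⨅ ε : {e : ℝ // 0 < e ∧ e < 1}, limsup (dHRate ε.1 E F) atTop ≤ regRelEntropy E F := by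
  refine EReal.le_of_forall_lt_iff_le.mp fun r hr => ?_
  have hlim : Tendsto (fun ε : ℝ => ((r / (1 - 3 * ε) : ℝ) : EReal)) (𝓝[>] 0) (𝓝 (r : EReal)) := by
    have hcont : ContinuousAt (fun ε : ℝ => r / (1 - 3 * ε)) 0 :=
      ContinuousAt.div (by fun_prop) (by fun_prop) (by norm_num)
    simpa [EReal.tendsto_coe, ContinuousAt] using hcont.tendsto.mono_left nhdsWithin_le_nhds
  refine ge_of_tendsto hlim ?_
  filter_upwards [Ioo_mem_nhdsGT (show (0 : ℝ) < 1 / 3 by norm_num)] with ε hε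
  exact iInf_le_of_le ⟨ε, hε.1, hε.2.trans (by norm_num)⟩
    (limsup_dHRate_le hE hF hr.le hε.1 hε.2)

end Rates

theorem steins_lemma_parallel_general {n m : Type} [Fintype n] [Fintype m] [DecidableEq m]
    (E F : Matrix n n ℂ →ₗ[ℂ] Matrix m m ℂ)
    (hE : IsQChannel E) (hF : IsQChannel F) :
    (⨅ ε : {e : ℝ // 0 < e ∧ e < 1},
        Filter.limsup (fun k : ℕ => (((k : ℝ)⁻¹ : ℝ) : EReal) *
          chDiv (dHD ε.1) (tpowChannel E k) (tpowChannel F k)) Filter.atTop)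
      = regRelEntropy E F ∧
    (⨅ ε : {e : ℝ // 0 < e ∧ e < 1},
        Filter.liminf (fun k : ℕ => (((k : ℝ)⁻¹ : ℝ) : EReal) *
          chDiv (dHD ε.1) (tpowChannel E k) (tpowChannel F k)) Filter.atTop)
      = regRelEntropy E F := by
  have hupper := iInf_limsup_dHRate_le hE.isCPTP hF.isCPTP
  have hlower : regRelEntropy E F ≤
      ⨅ ε : {e : ℝ // 0 < e ∧ e < 1}, liminf (dHRate ε.1 E F) atTop :=
    le_iInf fun ε => regRelEntropy_le_liminf_dHRate hE.isCPTP hF.isCPTP ε.2.1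
  have hle : ⨅ ε : {e : ℝ // 0 < e ∧ e < 1}, liminf (dHRate ε.1 E F) atTop ≤
      ⨅ ε : {e : ℝ // 0 < e ∧ e < 1}, limsup (dHRate ε.1 E F) atTop :=
    iInf_mono fun _ => liminf_le_limsup
  exact ⟨hupper.antisymm (hlower.trans hle), (hle.trans hupper).antisymm hlower⟩

/-- Stein's lemma for parallel channel discrimination. -/
theorem steins_lemma_parallel {dA dB : ℕ}
    (E F : Matrix (Fin dA) (Fin dA) ℂ →ₗ[ℂ] Matrix (Fin dB) (Fin dB) ℂ)
    (hE : IsQChannel E) (hF : IsQChannel F) :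
    (⨅ ε : {e : ℝ // 0 < e ∧ e < 1},
        Filter.limsup (fun k : ℕ => (((k : ℝ)⁻¹ : ℝ) : EReal) *
          chDiv (dHD ε.1) (tpowChannel E k) (tpowChannel F k)) Filter.atTop)
      = regRelEntropy E F ∧
    (⨅ ε : {e : ℝ // 0 < e ∧ e < 1},
        Filter.liminf (fun k : ℕ => (((k : ℝ)⁻¹ : ℝ) : EReal) *
          chDiv (dHD ε.1) (tpowChannel E k) (tpowChannel F k)) Filter.atTop)
      = regRelEntropy E F :=
  steins_lemma_parallel_general E F hE hF

end QCD
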